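/- arXiv:2503.12665 — 8 statements merged into one kernel-verified Lean document; each statement's English description precedes it below -/
import Mathlib

section
/- Let x : [0,∞) → ℝⁿ be a solution of the feedback-linearization dynamics ẋ(t) = -T(x(t))(∇f(x(t)) + J_h(x(t))ᵀ λ(t)) with λ(t) = -(J_h(x(t))T(x(t))J_h(x(t))ᵀ)⁻¹(J_h(x(t))T(x(t))∇f(x(t)) - K h(x(t))), where K = diag(k₁,…,k_m) with each k_i > 0. Then for every i ∈ {1,…,m} and every t ≥ 0, h_i(x(t)) = e^{-k_i t} h_i(x(0)). In particular, if h_i(x(0)) ≥ 0 then h_i(x(t)) ≥ 0 for all t ≥ 0, if h_i(x(0)) < 0 then h_i(x(t)) < 0 for all t ≥ 0, and h(x(t)) → 0 at an exponential rate as t → ∞. -/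
/-!
Writing `A = J T Jᵀ`, the multiplier is chosen so that `A λ = -(J T ∇f - K h)`, hence by the chain rule
`d/dt h(x t) = J ẋ = -(J T ∇f) - A λ = -K h(x t)`. As `K` is diagonal this is a decoupled family of
scalar equations `du/dt = -kᵢ u`, whose only solution is `u t = exp (-kᵢ t) u 0` because
`exp (kᵢ t) u t` has zero derivative. The sign and limit claims are read off from this formula.
-/

open Matrix Filter Set

noncomputable section

/-- Euclidean norm of a finite real vector. -/
def euclNorm {n : ℕ} (v : Fin n → ℝ) : ℝ := Real.sqrt (∑ i, v i ^ 2)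

/-- Sup (ℓ∞) norm of a finite real vector. -/
def supNorm {m : ℕ} (v : Fin m → ℝ) : ℝ := ⨆ i, |v i|

/-- The continuous linear map `v ↦ g ⬝ᵥ v` (differential given by a gradient vector). -/
def dotCLM {n : ℕ} (g : Fin n → ℝ) : (Fin n → ℝ) →L[ℝ] ℝ :=
  ∑ i, g i • ContinuousLinearMap.proj i

/-- The continuous linear map `v ↦ A *ᵥ v` (differential given by a Jacobian matrix). -/
def mulVecCLM {m n : ℕ} (A : Matrix (Fin m) (Fin n) ℝ) : (Fin n → ℝ) →L[ℝ] (Fin m → ℝ) :=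
  LinearMap.toContinuousLinearMap A.mulVecLin

/-- Uniqueness for the scalar linear equation `du/dt = -c u` on the half-line `[0, ∞)`. -/
theorem eq_exp_of_hasDerivAt {u : ℝ → ℝ} {c : ℝ}
    (hu : ∀ t, 0 ≤ t → HasDerivAt u (-(c * u t)) t) (t : ℝ) (ht : 0 ≤ t) :
    u t = Real.exp (-c * t) * u 0 := by
  have hd : ∀ s, 0 ≤ s → HasDerivAt (fun s => Real.exp (c * s) * u s) 0 s := by
    intro s hs
    have h1 : HasDerivAt (fun s : ℝ => Real.exp (c * s)) (Real.exp (c * s) * (c * 1)) s :=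
      ((hasDerivAt_id s).const_mul c).exp
    exact (h1.mul (hu s hs)).congr_deriv (by ring)
  have hc : Real.exp (c * t) * u t = Real.exp (c * 0) * u 0 :=
    constant_of_has_deriv_right_zero
      (fun s hs => (hd s hs.1).continuousAt.continuousWithinAt)
      (fun s hs => (hd s hs.1).hasDerivWithinAt) t ⟨ht, le_rfl⟩
  rw [mul_zero, Real.exp_zero, one_mul] at hc
  rw [← hc, ← mul_assoc, ← Real.exp_add]
  simp

/-- Substituting the feedback-linearizing multiplier makes the image of the velocity under the
Jacobian `J` equal to `-w`; here `w` plays the role of `K h`. -/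
theorem mulVec_velocity_eq {n m : ℕ} (J : Matrix (Fin m) (Fin n) ℝ) (T : Matrix (Fin n) (Fin n) ℝ)
    (g : Fin n → ℝ) (w lam : Fin m → ℝ) (hA : IsUnit (J * T * Jᵀ))
    (hlam : lam = -((J * T * Jᵀ)⁻¹ *ᵥ ((J * T) *ᵥ g - w))) :
    J *ᵥ (-(T *ᵥ (g + Jᵀ *ᵥ lam))) = -w := by
  have hcancel : (J * T * Jᵀ) *ᵥ lam = -((J * T) *ᵥ g - w) := by
    rw [hlam, mulVec_neg, mulVec_mulVec,
      Matrix.mul_nonsing_inv _ ((Matrix.isUnit_iff_isUnit_det _).1 hA), one_mulVec]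
  rw [mulVec_neg, mulVec_mulVec, mulVec_add, mulVec_mulVec, hcancel]
  abel

/-- Feedback linearization for equality-constrained optimization: the constraint
values decay exactly exponentially along the trajectory, hence keep their sign and
tend to zero. -/
theorem stmt_0
    {n m : ℕ}
    (f : (Fin n → ℝ) → ℝ) (h : (Fin n → ℝ) → (Fin m → ℝ))
    (gradf : (Fin n → ℝ) → (Fin n → ℝ))
    (J : (Fin n → ℝ) → Matrix (Fin m) (Fin n) ℝ)
    (T : (Fin n → ℝ) → Matrix (Fin n) (Fin n) ℝ)
    (lmin lmax : ℝ) (hlmin : 0 < lmin) (hminmax : lmin ≤ lmax)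
    (hTsymm : ∀ p, (T p).IsSymm)
    (hTlb : ∀ p, (T p - lmin • (1 : Matrix (Fin n) (Fin n) ℝ)).PosSemidef)
    (hTub : ∀ p, (lmax • (1 : Matrix (Fin n) (Fin n) ℝ) - T p).PosSemidef)
    (hgrad : ∀ p, HasFDerivAt f (dotCLM (gradf p)) p)
    (hJac : ∀ p, HasFDerivAt h (mulVecCLM (J p)) p)
    (k : Fin m → ℝ) (hk : ∀ i, 0 < k i)
    (x : ℝ → (Fin n → ℝ)) (lam : ℝ → (Fin m → ℝ))
    (hInv : ∀ t, 0 ≤ t → IsUnit (J (x t) * T (x t) * (J (x t))ᵀ))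
    (hlam : ∀ t, 0 ≤ t →
      lam t = -((J (x t) * T (x t) * (J (x t))ᵀ)⁻¹ *ᵥ
        ((J (x t) * T (x t)) *ᵥ gradf (x t) - Matrix.diagonal k *ᵥ h (x t))))
    (hx : ∀ t, 0 ≤ t →
      HasDerivAt x (-(T (x t) *ᵥ (gradf (x t) + (J (x t))ᵀ *ᵥ lam t))) t) :
    (∀ i, ∀ t, 0 ≤ t → h (x t) i = Real.exp (-(k i) * t) * h (x 0) i) ∧
    (∀ i, 0 ≤ h (x 0) i → ∀ t, 0 ≤ t → 0 ≤ h (x t) i) ∧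
    (∀ i, h (x 0) i < 0 → ∀ t, 0 ≤ t → h (x t) i < 0) ∧
    Tendsto (fun t => h (x t)) atTop (nhds 0) := by
  have hode : ∀ i t, 0 ≤ t → HasDerivAt (fun t => h (x t) i) (-(k i * h (x t) i)) t := by
    intro i t ht
    have h1 := (hJac (x t)).comp_hasDerivAt t (hx t ht)
    have h2 : mulVecCLM (J (x t)) (-(T (x t) *ᵥ (gradf (x t) + (J (x t))ᵀ *ᵥ lam t)))
        = -(Matrix.diagonal k *ᵥ h (x t)) :=
      mulVec_velocity_eq _ _ _ _ _ (hInv t ht) (hlam t ht)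
    rw [h2] at h1
    simpa [mulVec_diagonal] using hasDerivAt_pi.1 h1 i
  have hsol : ∀ i t, 0 ≤ t → h (x t) i = Real.exp (-(k i) * t) * h (x 0) i :=
    fun i => eq_exp_of_hasDerivAt (u := fun t => h (x t) i) (hode i)
  refine ⟨hsol, fun i h0 t ht => ?_, fun i h0 t ht => ?_, tendsto_pi_nhds.2 fun i => ?_⟩
  · rw [hsol i t ht]
    exact mul_nonneg (Real.exp_pos _).le h0
  · rw [hsol i t ht]
    exact mul_neg_of_pos_of_neg (Real.exp_pos _) h0
  · have h1 : Tendsto (fun t => Real.exp (-(k i) * t) * h (x 0) i) atTop (nhds 0) := by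
      simpa using (Real.tendsto_exp_atBot.comp
        (tendsto_id.const_mul_atTop_of_neg (neg_neg_of_pos (hk i)))).mul_const (h (x 0) i)
    refine h1.congr' ?_
    filter_upwards [eventually_ge_atTop 0] with t ht using (hsol i t ht).symm
end
end

section
/- Let x : [0,∞) → ℝⁿ be a solution of the feedback-linearization dynamics ẋ(t) = -T(x(t))(∇f(x(t)) + J_h(x(t))ᵀ λ(t)) with λ(t) = -(J_h(x(t))T(x(t))J_h(x(t))ᵀ)⁻¹(J_h(x(t))T(x(t))∇f(x(t)) - K h(x(t))), where K = diag(k₁,…,k_m), k_i > 0. Assume ‖∇f(x)‖ < M, ‖J_h(x)‖ < M, f(x) ≥ f_min, and (J_h(x)J_h(x)ᵀ)⁻¹ ≺ D² I for all x. Define λ̄(t) := -(J_h(x(t))T(x(t))J_h(x(t))ᵀ)⁻¹ J_h(x(t))T(x(t))∇f(x(t)) and ℓ(x) := f(x) + (λ_max/λ_min)(MD)² Σ_{i=1}^m |h_i(x)|. Then for every T > 0, ∫₀ᵀ ‖∇f(x(t)) + J_h(x(t))ᵀ λ̄(t)‖² dt ≤ (ℓ(x(0)) - ℓ(x(T)))/λ_min,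 and moreover lim_{t→∞} (λ(t) - λ̄(t)) = 0. -/
/-!
Write `A = J T Jᵀ`, `g = ∇f + Jᵀ λ̄` and `e = λ - λ̄ = A⁻¹ K h`. By construction `J T g = 0` and
`A e = K h`, so along the flow `ẋ = -T (g + Jᵀ e)` one gets `d/dt h(x) = -K h(x)`: every constraint
value decays exactly, `h_i(x(t)) = h_i(x(0)) exp(-k_i t)` (`decay`). In particular `|h_i(x(t))|`
is differentiable, with derivative `-k_i |h_i(x(t))|`.

The identity `d/dt f(x) = -gᵀ T g + λ̄ᵀ K h` (`energy_identity`) combined with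
`|λ̄_i| ≤ ‖λ̄‖ ≤ (λ_max/λ_min) (M D)²` gives `d/dt ℓ(x) ≤ -λ_min ‖g‖²`. Integrating this inequality
gives the bound. No measurability of `T`, `∇f` or `J` is available, so the residual might fail to
be integrable; its integral is then `0` by convention and the bound reduces to `ℓ` being
nonincreasing.

The bounds on `A⁻¹` come from `‖v‖² ≤ D² ‖Jᵀ v‖² ≤ (D²/λ_min) vᵀ A v` (`inv_bound`), and the same
estimate yields `‖e‖ ≤ (D²/λ_min) ‖K h‖ → 0`.
-/


open Matrix Filter Set

noncomputable section

/-- Operator (spectral) norm of a matrix, i.e. its `ℓ² → ℓ²` operator norm. -/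
def matOpNorm {m n : ℕ} (A : Matrix (Fin m) (Fin n) ℝ) : ℝ :=
  ‖LinearMap.toContinuousLinearMap (Matrix.toEuclideanLin A)‖

lemma euclNorm_eq_norm {n : ℕ} (v : Fin n → ℝ) : euclNorm v = ‖WithLp.toLp 2 v‖ := by
  simp [euclNorm, EuclideanSpace.norm_eq]

lemma euclNorm_nonneg {n : ℕ} (v : Fin n → ℝ) : 0 ≤ euclNorm v := Real.sqrt_nonneg _

lemma euclNorm_sq {n : ℕ} (v : Fin n → ℝ) : euclNorm v ^ 2 = v ⬝ᵥ v := by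
  rw [euclNorm, Real.sq_sqrt (Finset.sum_nonneg fun i _ => sq_nonneg _)]
  simp [dotProduct, sq]

lemma abs_le_euclNorm {n : ℕ} (v : Fin n → ℝ) (i : Fin n) : |v i| ≤ euclNorm v := by
  rw [euclNorm, ← Real.sqrt_sq_eq_abs]
  exact Real.sqrt_le_sqrt
    (Finset.single_le_sum (f := fun j => v j ^ 2) (fun j _ => sq_nonneg _) (Finset.mem_univ i))

lemma dotProduct_le_euclNorm {n : ℕ} (v w : Fin n → ℝ) :
    v ⬝ᵥ w ≤ euclNorm v * euclNorm w := by
  have h := real_inner_le_norm (WithLp.toLp 2 w) (WithLp.toLp 2 v)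
  rw [EuclideanSpace.inner_toLp_toLp] at h
  rw [euclNorm_eq_norm, euclNorm_eq_norm, mul_comm]
  simpa using h

lemma euclNorm_mulVec_le {m n : ℕ} (A : Matrix (Fin m) (Fin n) ℝ) (v : Fin n → ℝ) :
    euclNorm (A *ᵥ v) ≤ matOpNorm A * euclNorm v := by
  rw [euclNorm_eq_norm, euclNorm_eq_norm]
  have := (LinearMap.toContinuousLinearMap (Matrix.toEuclideanLin A)).le_opNorm (WithLp.toLp 2 v)
  simpa [matOpNorm] using this

/-- A positive semidefinite `C` with `C ⪯ d I` satisfies `C² ⪯ d C`: this is Cauchy–Schwarz for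
the form of `C` applied to `u` and `C u`. -/
lemma sq_le_of_posSemidef {n : ℕ} {C : Matrix (Fin n) (Fin n) ℝ} (hC : C.PosSemidef) {d : ℝ}
    (hd : 0 ≤ d) (hub : ∀ w, w ⬝ᵥ (C *ᵥ w) ≤ d * (w ⬝ᵥ w)) (u : Fin n → ℝ) :
    (C *ᵥ u) ⬝ᵥ (C *ᵥ u) ≤ d * (u ⬝ᵥ (C *ᵥ u)) := by
  have hnn : ∀ w, 0 ≤ w ⬝ᵥ (C *ᵥ w) := fun w => by
    simpa using hC.dotProduct_mulVec_nonneg w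
  have hsymm : Cᵀ = C := by simpa [IsHermitian] using hC.isHermitian
  set w := C *ᵥ u with hw
  have hcross : u ⬝ᵥ (C *ᵥ w) = w ⬝ᵥ w := by
    rw [dotProduct_mulVec, ← mulVec_transpose, hsymm]
  have hW : 0 ≤ w ⬝ᵥ w := by rw [← euclNorm_sq]; positivity
  -- The form is nonnegative at `u - s w` for every `s`, so its discriminant in `s` is nonpositive.
  have hquad : ∀ s : ℝ, 0 ≤ (d * (w ⬝ᵥ w)) * (s * s) + (-2 * (w ⬝ᵥ w)) * s + u ⬝ᵥ w := by
    intro s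
    have h1 := hnn (u - s • w)
    have h2 : (u - s • w) ⬝ᵥ (C *ᵥ (u - s • w)) =
        u ⬝ᵥ w - 2 * s * (w ⬝ᵥ w) + s * s * (w ⬝ᵥ (C *ᵥ w)) := by
      simp only [mulVec_sub, mulVec_smul, sub_dotProduct, dotProduct_sub, smul_dotProduct,
        dotProduct_smul, smul_eq_mul, hcross, ← hw]
      ring
    nlinarith [hub w, mul_self_nonneg s]
  have hdisc := discrim_le_zero hquad
  rw [discrim] at hdisc
  rcases hW.eq_or_lt with h0 | h0
  · rw [← h0]; exact mul_nonneg hd (hnn u)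
  · nlinarith

/-- If `(J Jᵀ)⁻¹ ⪯ D² I` and `T ⪰ λ_min I`, then `‖(J T Jᵀ)⁻¹‖ ≤ D² / λ_min`. -/
lemma inv_bound {m n : ℕ} {J : Matrix (Fin m) (Fin n) ℝ} {T : Matrix (Fin n) (Fin n) ℝ}
    {lmin D : ℝ} (hlmin : 0 < lmin) (hT : ∀ u, lmin * (u ⬝ᵥ u) ≤ u ⬝ᵥ (T *ᵥ u))
    (hJJ : IsUnit (J * Jᵀ))
    (hD : (D ^ 2 • (1 : Matrix (Fin m) (Fin m) ℝ) - (J * Jᵀ)⁻¹).PosDef) (v : Fin m → ℝ) :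
    euclNorm v ≤ D ^ 2 / lmin * euclNorm ((J * T * Jᵀ) *ᵥ v) := by
  have hB : (J * Jᵀ).PosSemidef := by
    simpa using posSemidef_self_mul_conjTranspose J
  have hdet := (Matrix.isUnit_iff_isUnit_det _).1 hJJ
  have h1 : v ⬝ᵥ v ≤ D ^ 2 * ((Jᵀ *ᵥ v) ⬝ᵥ (Jᵀ *ᵥ v)) := by
    have := sq_le_of_posSemidef hB.inv (sq_nonneg D) (fun w => by
      have := hD.posSemidef.dotProduct_mulVec_nonneg w
      simp [sub_mulVec, smul_mulVec] at this
      linarith) ((J * Jᵀ) *ᵥ v)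
    rw [mulVec_mulVec, Matrix.nonsing_inv_mul _ hdet, one_mulVec, ← mulVec_mulVec] at this
    rw [dotProduct_comm (J *ᵥ _) v, dotProduct_mulVec v, ← mulVec_transpose] at this
    exact this
  have h2 := hT (Jᵀ *ᵥ v)
  have h3 : (Jᵀ *ᵥ v) ⬝ᵥ (T *ᵥ (Jᵀ *ᵥ v)) = v ⬝ᵥ ((J * T * Jᵀ) *ᵥ v) := by
    rw [← mulVec_mulVec, ← mulVec_mulVec, dotProduct_mulVec v, ← mulVec_transpose]
  have h4 := dotProduct_le_euclNorm v ((J * T * Jᵀ) *ᵥ v)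
  rw [← euclNorm_sq] at h1
  have h5 : euclNorm v * euclNorm v ≤
      euclNorm v * (D ^ 2 / lmin * euclNorm ((J * T * Jᵀ) *ᵥ v)) := by
    calc euclNorm v * euclNorm v ≤ D ^ 2 * ((Jᵀ *ᵥ v) ⬝ᵥ (Jᵀ *ᵥ v)) := by linarith
      _ = D ^ 2 / lmin * (lmin * ((Jᵀ *ᵥ v) ⬝ᵥ (Jᵀ *ᵥ v))) := by field_simp
      _ ≤ D ^ 2 / lmin * (euclNorm v * euclNorm ((J * T * Jᵀ) *ᵥ v)) :=
          mul_le_mul_of_nonneg_left (by linarith) (by positivity)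
      _ = _ := by ring
  rcases (euclNorm_nonneg v).eq_or_lt with h0 | h0
  · rw [← h0]
    have := euclNorm_nonneg ((J * T * Jᵀ) *ᵥ v)
    positivity
  · exact le_of_mul_le_mul_left h5 h0

/-- The derivative of the objective along the flow. With `J T (∇f + Jᵀ μ) = 0`, it splits into the
dissipation `-gᵀ T g`, `g = ∇f + Jᵀ μ`, and a term `μ ⬝ J T Jᵀ e` carried by the constraints. -/
lemma energy_identity {m n : ℕ} {J : Matrix (Fin m) (Fin n) ℝ} {T : Matrix (Fin n) (Fin n) ℝ}
    (hT : T.IsSymm) (a : Fin n → ℝ) (mu e : Fin m → ℝ)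
    (hg : (J * T) *ᵥ (a + Jᵀ *ᵥ mu) = 0) :
    a ⬝ᵥ (-(T *ᵥ (a + Jᵀ *ᵥ (mu + e)))) =
      -((a + Jᵀ *ᵥ mu) ⬝ᵥ (T *ᵥ (a + Jᵀ *ᵥ mu))) + mu ⬝ᵥ ((J * T * Jᵀ) *ᵥ e) := by
  set g := a + Jᵀ *ᵥ mu with hgdef
  have ha : a = g - Jᵀ *ᵥ mu := by simp [hgdef]
  have hdot : ∀ y, (Jᵀ *ᵥ mu) ⬝ᵥ (T *ᵥ y) = mu ⬝ᵥ ((J * T) *ᵥ y) := fun y => by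
    rw [← mulVec_mulVec, dotProduct_mulVec mu, ← mulVec_transpose]
  have hz : g ⬝ᵥ (T *ᵥ (Jᵀ *ᵥ e)) = 0 := by
    rw [mulVec_mulVec, dotProduct_mulVec, ← mulVec_transpose, transpose_mul, transpose_transpose,
      hT.eq, hg, zero_dotProduct]
  have hsum : a + Jᵀ *ᵥ (mu + e) = g + Jᵀ *ᵥ e := by rw [mulVec_add, hgdef, add_assoc]
  rw [hsum, dotProduct_neg, mulVec_add, dotProduct_add]
  have e1 : a ⬝ᵥ (T *ᵥ g) = g ⬝ᵥ (T *ᵥ g) := by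
    conv_lhs => rw [ha]
    rw [sub_dotProduct, hdot, hg, dotProduct_zero, sub_zero]
  have e2 : a ⬝ᵥ (T *ᵥ (Jᵀ *ᵥ e)) = -(mu ⬝ᵥ ((J * T * Jᵀ) *ᵥ e)) := by
    conv_lhs => rw [ha]
    rw [sub_dotProduct, hdot, hz, mulVec_mulVec, zero_sub]
  rw [e1, e2]
  ring

/-- A solution of `y' = -k y` on `[0, ∞)` is `y(0) exp(-k t)`. -/
lemma decay {y : ℝ → ℝ} {k : ℝ} (hy : ∀ t, 0 ≤ t → HasDerivAt y (-(k * y t)) t) {t : ℝ}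
    (ht : 0 ≤ t) : y t = y 0 * Real.exp (-(k * t)) := by
  have hd : ∀ s, 0 ≤ s → HasDerivAt (fun s => y s * Real.exp (k * s)) 0 s := fun s hs => by
    have h1 : HasDerivAt (fun s => Real.exp (k * s)) (Real.exp (k * s) * k) s := by
      simpa using ((hasDerivAt_id s).const_mul k).exp
    convert! (hy s hs).mul h1 using 1
    ring
  have := constant_of_has_deriv_right_zero (a := 0) (b := t)
    (fun s hs => (hd s hs.1).continuousAt.continuousWithinAt)
    (fun s hs => (hd s hs.1).hasDerivWithinAt) t ⟨ht, le_rfl⟩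
  simp only [mul_zero, Real.exp_zero, mul_one] at this
  rw [← this, mul_assoc, ← Real.exp_add]
  simp

/-- Integral form of `φ' ≤ -c r`, without any measurability assumption on `r ≥ 0`. -/
lemma integral_le_of_deriv_le {φ φ' r : ℝ → ℝ} {c b : ℝ} (hc : 0 < c) (hb : 0 ≤ b)
    (hr : ∀ t, 0 ≤ r t) (hφ : ∀ t, 0 ≤ t → HasDerivAt φ (φ' t) t)
    (hle : ∀ t, 0 ≤ t → φ' t ≤ -(c * r t)) :
    ∫ t in (0 : ℝ)..b, r t ≤ (φ 0 - φ b) / c := by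
  have hcont : ContinuousOn φ (Icc 0 b) :=
    fun t ht => (hφ t ht.1).continuousAt.continuousWithinAt
  rw [le_div_iff₀ hc]
  by_cases hint : IntervalIntegrable r MeasureTheory.volume 0 b
  · have hI : MeasureTheory.IntegrableOn (fun t => -(c * r t)) (Icc 0 b) := by
      rw [integrableOn_Icc_iff_integrableOn_Ioc]
      exact (((intervalIntegrable_iff_integrableOn_Ioc_of_le hb).1 hint).const_mul c).neg
    have := intervalIntegral.sub_le_integral_of_hasDeriv_right_of_le hb hcont
      (fun t ht => (hφ t ht.1.le).hasDerivWithinAt) hI (fun t ht => hle t ht.1.le)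
    rw [intervalIntegral.integral_neg, intervalIntegral.integral_const_mul] at this
    linarith
  · -- The integral takes the default value `0`, so monotonicity of `φ` suffices.
    rw [intervalIntegral.integral_undef hint, zero_mul]
    have hanti : AntitoneOn φ (Icc 0 b) := by
      refine antitoneOn_of_hasDerivWithinAt_nonpos (convex_Icc 0 b) hcont
        (fun t ht => (hφ t (interior_subset ht).1).hasDerivWithinAt) fun t ht => ?_
      have h0 := (interior_subset ht).1
      nlinarith [hle t h0, hr t]
    linarith [hanti ⟨le_rfl, hb⟩ ⟨hb, le_rfl⟩ hb]

/-- Feedback linearization for equality-constrained optimization: integral bound on the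
stationarity residual in terms of the merit-function decrease, and `λ(t) - λ̄(t) → 0`. -/
theorem stmt_2
    {n m : ℕ}
    (f : (Fin n → ℝ) → ℝ) (h : (Fin n → ℝ) → (Fin m → ℝ))
    (gradf : (Fin n → ℝ) → (Fin n → ℝ))
    (J : (Fin n → ℝ) → Matrix (Fin m) (Fin n) ℝ)
    (T : (Fin n → ℝ) → Matrix (Fin n) (Fin n) ℝ)
    (lmin lmax : ℝ) (hlmin : 0 < lmin) (hminmax : lmin ≤ lmax)
    (hTsymm : ∀ p, (T p).IsSymm)
    (hTlb : ∀ p, (T p - lmin • (1 : Matrix (Fin n) (Fin n) ℝ)).PosSemidef)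
    (hTub : ∀ p, (lmax • (1 : Matrix (Fin n) (Fin n) ℝ) - T p).PosSemidef)
    (hgrad : ∀ p, HasFDerivAt f (dotCLM (gradf p)) p)
    (hJac : ∀ p, HasFDerivAt h (mulVecCLM (J p)) p)
    (M : ℝ) (hM : ∀ p, euclNorm (gradf p) < M ∧ matOpNorm (J p) < M)
    (fmin : ℝ) (hfmin : ∀ p, fmin ≤ f p)
    (D : ℝ) (hJJ : ∀ p, IsUnit (J p * (J p)ᵀ))
    (hD : ∀ p, ((D ^ 2 • (1 : Matrix (Fin m) (Fin m) ℝ)) - (J p * (J p)ᵀ)⁻¹).PosDef)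
    (k : Fin m → ℝ) (hk : ∀ i, 0 < k i)
    (x : ℝ → (Fin n → ℝ)) (lam lamBar : ℝ → (Fin m → ℝ))
    (hInv : ∀ t, 0 ≤ t → IsUnit (J (x t) * T (x t) * (J (x t))ᵀ))
    (hlam : ∀ t, 0 ≤ t →
      lam t = -((J (x t) * T (x t) * (J (x t))ᵀ)⁻¹ *ᵥ
        ((J (x t) * T (x t)) *ᵥ gradf (x t) - Matrix.diagonal k *ᵥ h (x t))))
    (hlamBar : ∀ t,
      lamBar t = -((J (x t) * T (x t) * (J (x t))ᵀ)⁻¹ *ᵥ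
        ((J (x t) * T (x t)) *ᵥ gradf (x t))))
    (hx : ∀ t, 0 ≤ t →
      HasDerivAt x (-(T (x t) *ᵥ (gradf (x t) + (J (x t))ᵀ *ᵥ lam t))) t) :
    (∀ Tf : ℝ, 0 < Tf →
      (∫ t in (0:ℝ)..Tf, euclNorm (gradf (x t) + (J (x t))ᵀ *ᵥ lamBar t) ^ 2) ≤
        ((f (x 0) + lmax / lmin * (M * D) ^ 2 * ∑ i, |h (x 0) i|) -
          (f (x Tf) + lmax / lmin * (M * D) ^ 2 * ∑ i, |h (x Tf) i|)) / lmin) ∧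
    Tendsto (fun t => lam t - lamBar t) atTop (nhds 0) := by
  have hlmax : 0 < lmax := hlmin.trans_le hminmax
  have hTlb' : ∀ p u, lmin * (u ⬝ᵥ u) ≤ u ⬝ᵥ (T p *ᵥ u) := fun p u => by
    have := (hTlb p).dotProduct_mulVec_nonneg u
    simp [sub_mulVec, smul_mulVec] at this
    linarith
  have hTub' : ∀ p u, u ⬝ᵥ (T p *ᵥ u) ≤ lmax * (u ⬝ᵥ u) := fun p u => by
    have := (hTub p).dotProduct_mulVec_nonneg u
    simp [sub_mulVec, smul_mulVec] at this
    linarith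
  have hTpsd : ∀ p, (T p).PosSemidef := fun p => by
    have h1 : (lmin • (1 : Matrix (Fin n) (Fin n) ℝ)).PosSemidef := PosSemidef.one.smul hlmin.le
    simpa using (hTlb p).add h1
  have hTnorm : ∀ p u, euclNorm (T p *ᵥ u) ≤ lmax * euclNorm u := fun p u => by
    refine le_of_sq_le_sq ?_ (mul_nonneg hlmax.le (euclNorm_nonneg u))
    rw [mul_pow, euclNorm_sq, euclNorm_sq]
    nlinarith [sq_le_of_posSemidef (hTpsd p) hlmax.le (hTub' p) u, hTub' p u]
  have hdet : ∀ t, 0 ≤ t → IsUnit (J (x t) * T (x t) * (J (x t))ᵀ).det := fun t ht =>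
    (Matrix.isUnit_iff_isUnit_det _).1 (hInv t ht)
  have hbound : ∀ t v, euclNorm v ≤
      D ^ 2 / lmin * euclNorm ((J (x t) * T (x t) * (J (x t))ᵀ) *ᵥ v) := fun t v =>
    inv_bound hlmin (hTlb' (x t)) (hJJ _) (hD _) v
  -- `e = λ - λ̄` solves `J T Jᵀ e = K h`.
  have he : ∀ t, 0 ≤ t → (J (x t) * T (x t) * (J (x t))ᵀ) *ᵥ (lam t - lamBar t) =
      Matrix.diagonal k *ᵥ h (x t) := fun t ht => by
    have : lam t - lamBar t =
        (J (x t) * T (x t) * (J (x t))ᵀ)⁻¹ *ᵥ (Matrix.diagonal k *ᵥ h (x t)) := by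
      rw [hlam t ht, hlamBar t, mulVec_sub]
      abel
    rw [this, mulVec_mulVec, Matrix.mul_nonsing_inv _ (hdet t ht), one_mulVec]
  have hbar : ∀ t, 0 ≤ t → (J (x t) * T (x t) * (J (x t))ᵀ) *ᵥ lamBar t =
      -((J (x t) * T (x t)) *ᵥ gradf (x t)) := fun t ht => by
    rw [hlamBar t, mulVec_neg, mulVec_mulVec, Matrix.mul_nonsing_inv _ (hdet t ht), one_mulVec]
  have hg : ∀ t, 0 ≤ t →
      (J (x t) * T (x t)) *ᵥ (gradf (x t) + (J (x t))ᵀ *ᵥ lamBar t) = 0 := fun t ht => by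
    rw [mulVec_add, mulVec_mulVec, hbar t ht, add_neg_cancel]
  have hsplit : ∀ t, lam t = lamBar t + (lam t - lamBar t) := fun t => by abel
  have hdh : ∀ i t, 0 ≤ t → HasDerivAt (fun s => h (x s) i) (-(k i * h (x t) i)) t := by
    intro i t ht
    have h1 := hasDerivAt_pi.1 ((hJac (x t)).comp_hasDerivAt t (hx t ht)) i
    have h2 : mulVecCLM (J (x t)) (-(T (x t) *ᵥ (gradf (x t) + (J (x t))ᵀ *ᵥ lam t))) =
        -(Matrix.diagonal k *ᵥ h (x t)) := by
      rw [← he t ht]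
      change J (x t) *ᵥ _ = _
      rw [hsplit t, mulVec_add (J (x t))ᵀ, ← add_assoc, mulVec_neg, mulVec_mulVec, mulVec_add,
        hg t ht, zero_add, mulVec_mulVec, add_sub_cancel]
    rw [h2] at h1
    simpa [mulVec_diagonal] using h1
  have hdecay : ∀ i t, 0 ≤ t → h (x t) i = h (x 0) i * Real.exp (-(k i * t)) := fun i t ht =>
    decay (hdh i) ht
  have hM0 : 0 < M := (euclNorm_nonneg _).trans_lt (hM (x 0)).1
  set c := lmax / lmin * (M * D) ^ 2 with hc
  have hc0 : 0 ≤ c := by positivity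
  have hbarle : ∀ t, 0 ≤ t → euclNorm (lamBar t) ≤ c := fun t ht => by
    have h1 := hbound t (lamBar t)
    have hneg : euclNorm ((J (x t) * T (x t) * (J (x t))ᵀ) *ᵥ lamBar t) =
        euclNorm (J (x t) *ᵥ (T (x t) *ᵥ gradf (x t))) := by
      rw [hbar t ht, mulVec_mulVec]
      simp [euclNorm]
    have h2 : euclNorm (J (x t) *ᵥ (T (x t) *ᵥ gradf (x t))) ≤ M * (lmax * M) := by
      refine (euclNorm_mulVec_le _ _).trans ?_
      refine mul_le_mul (hM _).2.le ((hTnorm _ _).trans ?_) (euclNorm_nonneg _) hM0.le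
      exact mul_le_mul_of_nonneg_left (hM _).1.le hlmax.le
    rw [hneg] at h1
    calc euclNorm (lamBar t) ≤ D ^ 2 / lmin * (M * (lmax * M)) := h1.trans (by gcongr)
      _ = c := by rw [hc]; ring
  constructor
  · intro Tf hTf
    -- `|h_i(x(t))|` is replaced by its closed form, which is differentiable for every `t`.
    let φ : ℝ → ℝ := fun t => f (x t) + c * ∑ i, |h (x 0) i| * Real.exp (-(k i * t))
    have habs : ∀ i t, 0 ≤ t → |h (x t) i| = |h (x 0) i| * Real.exp (-(k i * t)) :=
      fun i t ht => by rw [hdecay i t ht, abs_mul, Real.abs_exp]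
    have hφeq : ∀ t, 0 ≤ t → φ t = f (x t) + c * ∑ i, |h (x t) i| := fun t ht => by
      simp only [φ, habs _ t ht]
    have hφ : ∀ t, 0 ≤ t → HasDerivAt φ
        (gradf (x t) ⬝ᵥ (-(T (x t) *ᵥ (gradf (x t) + (J (x t))ᵀ *ᵥ lam t))) +
          c * ∑ i, -(k i * |h (x t) i|)) t := by
      intro t ht
      have h1 := (hgrad (x t)).comp_hasDerivAt t (hx t ht)
      have h2 : ∀ v, dotCLM (gradf (x t)) v = gradf (x t) ⬝ᵥ v := fun v => by
        simp [dotCLM, dotProduct]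
      rw [h2] at h1
      refine h1.add (HasDerivAt.const_mul c (HasDerivAt.fun_sum fun i _ => ?_))
      have h3 : HasDerivAt (fun s => Real.exp (-(k i * s)))
          (Real.exp (-(k i * t)) * -k i) t := by
        simpa using ((hasDerivAt_id t).const_mul (k i)).neg.exp
      convert! h3.const_mul |h (x 0) i| using 1
      rw [habs i t ht]
      ring
    rw [← hφeq 0 le_rfl, ← hφeq Tf hTf.le]
    refine integral_le_of_deriv_le hlmin hTf.le (fun t => sq_nonneg _) hφ fun t ht => ?_
    rw [hsplit t, energy_identity (hTsymm _) _ _ _ (hg t ht), he t ht, euclNorm_sq]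
    have h1 : lamBar t ⬝ᵥ (Matrix.diagonal k *ᵥ h (x t)) ≤ c * ∑ i, k i * |h (x t) i| := by
      rw [dotProduct, Finset.mul_sum]
      refine Finset.sum_le_sum fun i _ => ?_
      rw [mulVec_diagonal]
      calc lamBar t i * (k i * h (x t) i) ≤ |lamBar t i * (k i * h (x t) i)| := le_abs_self _
        _ = |lamBar t i| * (k i * |h (x t) i|) := by
            rw [abs_mul, abs_mul, abs_of_pos (hk i)]
        _ ≤ c * (k i * |h (x t) i|) :=
            mul_le_mul_of_nonneg_right ((abs_le_euclNorm _ i).trans (hbarle t ht))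
              (mul_nonneg (hk i).le (abs_nonneg _))
    have h2 := hTlb' (x t) (gradf (x t) + (J (x t))ᵀ *ᵥ lamBar t)
    rw [Finset.sum_neg_distrib]
    linarith
  · have hKh : Tendsto (fun t => Matrix.diagonal k *ᵥ h (x t)) atTop (nhds 0) := by
      refine tendsto_pi_nhds.2 fun i => ?_
      have h1 : Tendsto (fun t => k i * (h (x 0) i * Real.exp (-(k i * t)))) atTop (nhds 0) := by
        have := Real.tendsto_exp_neg_atTop_nhds_zero.comp
          (tendsto_id.const_mul_atTop (hk i))
        simpa using (this.const_mul (h (x 0) i)).const_mul (k i)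
      refine h1.congr' ?_
      filter_upwards [eventually_ge_atTop 0] with t ht
      rw [mulVec_diagonal, hdecay i t ht]
    have hnorm : Tendsto (fun t => D ^ 2 / lmin * euclNorm (Matrix.diagonal k *ᵥ h (x t)))
        atTop (nhds 0) := by
      have hcont : Continuous (euclNorm : (Fin m → ℝ) → ℝ) := by
        unfold euclNorm
        fun_prop
      have := ((hcont.tendsto 0).comp hKh).const_mul (D ^ 2 / lmin)
      simpa [euclNorm] using this
    refine tendsto_pi_nhds.2 fun i => squeeze_zero_norm' ?_ hnorm
    filter_upwards [eventually_ge_atTop 0] with t ht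
    have := hbound t (lam t - lamBar t)
    rw [he t ht] at this
    exact (abs_le_euclNorm (lam t - lamBar t) i).trans this
end
end

section
/- Fix x_t ∈ ℝⁿ, a step size η > 0, and set K = (1/η) I. Assume (J_h(x)J_h(x)ᵀ)⁻¹ ≺ D² I for all x (so in particular J_h(x_t) has full row rank and J_h(x_t)T(x_t)J_h(x_t)ᵀ is invertible). Then the forward-Euler feedback-linearization step x_{t+1} = x_t - η T(x_t)( ∇f(x_t) - J_h(x_t)ᵀ (J_h(x_t)T(x_t)J_h(x_t)ᵀ)⁻¹ ( J_h(x_t)T(x_t)∇f(x_t) - (1/η) h(x_t) ) ) is the unique minimizer of the sequential quadratic program: minimize over x ∈ ℝⁿ the function ∇f(x_t)ᵀ(x - x_t) + (1/(2η))(x - x_t)ᵀ T(x_t)⁻¹ (x - x_t) subject to h(x_t) + J_h(x_t)(x - x_t) = 0. -/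
/-!
Write `S = J T Jᵀ`, `λ = S⁻¹ (J T ∇f - h / η)` and `d = xnext - xt`, so `d = -η T (∇f - Jᵀ λ)`.
Since `J Jᵀ` is invertible, `Jᵀ` is injective, hence `S` is positive definite and in particular
invertible (`isUnit_mul_posDef_mul_transpose`). Then `J d = -η (J T ∇f - S λ) = -h`, which is
feasibility, and `∇f + T⁻¹ d / η = Jᵀ λ`, which is the KKT stationarity condition.

A strictly convex quadratic has a strict minimum over an affine subspace at any KKT point
(`kkt_strict_min`): for another feasible point the increment `e` satisfies `J e = 0`, so the
first-order term `e ⬝ᵥ Jᵀ λ` vanishes and the objective grows by exactly `e ⬝ᵥ T⁻¹ e / (2 η) > 0`.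
-/

open Matrix Filter Set

noncomputable section

theorem isUnit_mul_posDef_mul_transpose {n m : ℕ} (A : Matrix (Fin m) (Fin n) ℝ)
    (T : Matrix (Fin n) (Fin n) ℝ) (hA : IsUnit (A * Aᵀ)) (hT : T.PosDef) :
    IsUnit (A * T * Aᵀ) := by
  have hinj : Function.Injective A.vecMul := by
    intro v w hvw
    apply Matrix.vecMul_injective_of_isUnit hA
    simp only [← Matrix.vecMul_vecMul]
    exact congrArg (fun u => u ᵥ* Aᵀ) hvw
  have hpd := hT.mul_mul_conjTranspose_same hinj
  rw [Matrix.conjTranspose_eq_transpose_of_trivial] at hpd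
  exact hpd.isUnit

/-- A positive definite quadratic has a strict minimum over an affine subspace at a point where
stationarity holds with multiplier `l`; here `d` is that point and `d + e` the competitor. -/
theorem kkt_strict_min {n m : ℕ} (A : Matrix (Fin m) (Fin n) ℝ)
    (P : Matrix (Fin n) (Fin n) ℝ) (hP : P.PosDef) (η : ℝ) (hη : 0 < η)
    (g d e : Fin n → ℝ) (l : Fin m → ℝ) (hkkt : P *ᵥ d = -η • (g - Aᵀ *ᵥ l))
    (he : A *ᵥ e = 0) (he0 : e ≠ 0) :
    g ⬝ᵥ d + (1 / (2 * η)) * (d ⬝ᵥ (P *ᵥ d)) <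
      g ⬝ᵥ (d + e) + (1 / (2 * η)) * ((d + e) ⬝ᵥ (P *ᵥ (d + e))) := by
  have hpos : 0 < e ⬝ᵥ (P *ᵥ e) := by
    simpa using hP.dotProduct_mulVec_pos he0
  have hPt : Pᵀ = P := by
    simpa [Matrix.conjTranspose_eq_transpose_of_trivial] using hP.isHermitian.eq
  have hsymm : d ⬝ᵥ (P *ᵥ e) = e ⬝ᵥ (P *ᵥ d) := by
    rw [Matrix.dotProduct_mulVec, ← Matrix.mulVec_transpose, hPt, dotProduct_comm]
  have horth : e ⬝ᵥ (Aᵀ *ᵥ l) = 0 := by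
    rw [Matrix.dotProduct_mulVec, Matrix.vecMul_transpose, he, zero_dotProduct]
  have hcross : e ⬝ᵥ (P *ᵥ d) = -η * (g ⬝ᵥ e) := by
    rw [hkkt, dotProduct_smul, dotProduct_sub, horth, dotProduct_comm e g, smul_eq_mul, sub_zero]
  have hexp : g ⬝ᵥ (d + e) + (1 / (2 * η)) * ((d + e) ⬝ᵥ (P *ᵥ (d + e))) =
      g ⬝ᵥ d + (1 / (2 * η)) * (d ⬝ᵥ (P *ᵥ d)) + (1 / (2 * η)) * (e ⬝ᵥ (P *ᵥ e)) := by
    rw [Matrix.mulVec_add]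
    simp only [dotProduct_add, add_dotProduct]
    rw [hsymm, hcross]
    field_simp
    ring
  rw [hexp]
  have : 0 < (1 / (2 * η)) * (e ⬝ᵥ (P *ᵥ e)) := by positivity
  linarith

/-- The forward-Euler discretization of the feedback-linearization dynamics (with
`K = (1/η) I`) is exactly the unique minimizer of the SQP subproblem with linearized
equality constraints. -/
theorem stmt_4
    {n m : ℕ}
    (f : (Fin n → ℝ) → ℝ) (h : (Fin n → ℝ) → (Fin m → ℝ))
    (gradf : (Fin n → ℝ) → (Fin n → ℝ))
    (J : (Fin n → ℝ) → Matrix (Fin m) (Fin n) ℝ)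
    (hgrad : ∀ p, HasFDerivAt f (dotCLM (gradf p)) p)
    (hJac : ∀ p, HasFDerivAt h (mulVecCLM (J p)) p)
    (D : ℝ) (hJJ : ∀ p, IsUnit (J p * (J p)ᵀ))
    (hD : ∀ p, ((D ^ 2 • (1 : Matrix (Fin m) (Fin m) ℝ)) - (J p * (J p)ᵀ)⁻¹).PosDef)
    (xt : Fin n → ℝ)
    (Tt : Matrix (Fin n) (Fin n) ℝ) (hTtsymm : Tt.IsSymm) (hTt : Tt.PosDef)
    (η : ℝ) (hη : 0 < η)
    (xnext : Fin n → ℝ)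
    (hxnext : xnext =
      xt - η • (Tt *ᵥ (gradf xt -
        (J xt)ᵀ *ᵥ ((J xt * Tt * (J xt)ᵀ)⁻¹ *ᵥ
          ((J xt * Tt) *ᵥ gradf xt - (1 / η) • h xt))))) :
    (h xt + J xt *ᵥ (xnext - xt) = 0) ∧
    (∀ y : Fin n → ℝ, h xt + J xt *ᵥ (y - xt) = 0 → y ≠ xnext →
      gradf xt ⬝ᵥ (xnext - xt) +
          (1 / (2 * η)) * ((xnext - xt) ⬝ᵥ (Tt⁻¹ *ᵥ (xnext - xt))) <
        gradf xt ⬝ᵥ (y - xt) +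
          (1 / (2 * η)) * ((y - xt) ⬝ᵥ (Tt⁻¹ *ᵥ (y - xt)))) := by
  have hS := isUnit_mul_posDef_mul_transpose (J xt) Tt (hJJ xt) hTt
  set S := J xt * Tt * (J xt)ᵀ with hSdef
  set l := S⁻¹ *ᵥ ((J xt * Tt) *ᵥ gradf xt - (1 / η) • h xt) with hl
  have hd : xnext - xt = -η • (Tt *ᵥ (gradf xt - (J xt)ᵀ *ᵥ l)) := by
    rw [hxnext, neg_smul]
    abel
  have hSl : S *ᵥ l = (J xt * Tt) *ᵥ gradf xt - (1 / η) • h xt := by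
    rw [hl, Matrix.mulVec_mulVec,
      Matrix.mul_nonsing_inv _ ((Matrix.isUnit_iff_isUnit_det _).mp hS), Matrix.one_mulVec]
  have hfeas : J xt *ᵥ (xnext - xt) = -h xt := by
    have hJT : J xt *ᵥ (Tt *ᵥ (gradf xt - (J xt)ᵀ *ᵥ l)) = (1 / η) • h xt := by
      rw [Matrix.mulVec_mulVec, Matrix.mulVec_sub, Matrix.mulVec_mulVec, ← hSdef, hSl,
        sub_sub_cancel]
    rw [hd, Matrix.mulVec_smul, hJT, smul_smul, neg_mul, mul_one_div_cancel hη.ne', neg_one_smul]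
  refine ⟨by rw [hfeas, add_neg_cancel], fun y hy hne => ?_⟩
  have hkkt : Tt⁻¹ *ᵥ (xnext - xt) = -η • (gradf xt - (J xt)ᵀ *ᵥ l) := by
    rw [hd, Matrix.mulVec_smul, Matrix.mulVec_mulVec,
      Matrix.nonsing_inv_mul _ ((Matrix.isUnit_iff_isUnit_det _).mp hTt.isUnit),
      Matrix.one_mulVec]
  have hsplit : y - xt = (xnext - xt) + (y - xnext) := by abel
  have he : J xt *ᵥ (y - xnext) = 0 := by
    rw [hsplit, Matrix.mulVec_add, hfeas, add_neg_cancel_left] at hy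
    exact hy
  rw [hsplit]
  exact kkt_strict_min (J xt) Tt⁻¹ hTt.inv η hη _ _ _ l hkkt he (sub_ne_zero.mpr hne)
end
end

section
/- Fix x_t ∈ ℝⁿ, a step size η > 0, and set K = (1/η) I. Suppose the constraint set {x : h(x_t) + J_h(x_t)(x - x_t) ≤ 0} (componentwise) is nonempty, and suppose λ_t ∈ ℝᵐ attains the minimum over {λ ≥ 0} of (1/2) λᵀ J_h(x_t)T(x_t)J_h(x_t)ᵀ λ + λᵀ( J_h(x_t)T(x_t)∇f(x_t) - (1/η) h(x_t) ). Then x_{t+1} := x_t - η T(x_t)( ∇f(x_t) + J_h(x_t)ᵀ λ_t ) is the unique minimizer of the quadratic program: minimize over x ∈ ℝⁿ the function ∇f(x_t)ᵀ(x - x_t) + (1/(2η))(x - x_t)ᵀ T(x_t)⁻¹ (x - x_t) subject to h(x_t) + J_h(x_t)(x - x_t) ≤ 0 componentwise. -/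
/-!
The gradient of the dual objective at `lamt` equals `-1/η` times the linearized constraint value
at `xnext`. Minimality of `lamt` over the nonnegative orthant gives the complementarity conditions
(`quad_complementarity`): this gradient is nonnegative, which is primal feasibility of `xnext`, and
it is orthogonal to `lamt`, which is complementary slackness. The definition of `xnext` is
stationarity of the Lagrangian, so for feasible `y = xnext + w` the objective grows by
`-lamt ⬝ᵥ (J w) + (1 / (2 η)) w ⬝ᵥ (T⁻¹ w)`. The first term is nonnegative by complementary
slackness and feasibility of `y`, and the second is positive for `w ≠ 0`.
-/

open Matrix Filter Set

noncomputable section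

/-- A quadratic `s * a + s ^ 2 * b` that is nonnegative on `(0, 1]` has nonnegative slope at `0`. -/
lemma slope_nonneg {a b : ℝ} (H : ∀ s : ℝ, 0 < s → s ≤ 1 → 0 ≤ s * a + s ^ 2 * b) : 0 ≤ a := by
  by_contra! ha
  have hpos : 0 < -a + |b| := by linarith [abs_nonneg b]
  -- This step makes `s * |b| < -a`, so the linear term dominates.
  have hs : 0 < -a / (-a + |b|) := div_pos (by linarith) hpos
  have h1 := H _ hs ((div_le_one hpos).2 (by linarith [abs_nonneg b]))
  set s := -a / (-a + |b|) with hsdef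
  have hmul : s * (-a + |b|) = -a := by rw [hsdef]; field_simp
  have h2 : 0 ≤ s * (a + s * b) := by nlinarith
  have h3 : 0 ≤ a + s * b := nonneg_of_mul_nonneg_right h2 hs
  nlinarith [le_abs_self b, mul_le_mul_of_nonneg_left (le_abs_self b) hs.le]

/-- First-order variational inequality at a minimizer of a quadratic over the nonnegative
orthant, in a direction `d` whose unit step stays in the orthant. -/
lemma quad_direction_nonneg {m : ℕ} {Q : Matrix (Fin m) (Fin m) ℝ} (hQ : Q.IsSymm)
    {q l : Fin m → ℝ} (hl : 0 ≤ l)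
    (hmin : ∀ μ : Fin m → ℝ, 0 ≤ μ →
      (1 / 2) * (l ⬝ᵥ (Q *ᵥ l)) + l ⬝ᵥ q ≤ (1 / 2) * (μ ⬝ᵥ (Q *ᵥ μ)) + μ ⬝ᵥ q)
    {d : Fin m → ℝ} (hd : 0 ≤ l + d) : 0 ≤ d ⬝ᵥ (Q *ᵥ l + q) := by
  refine slope_nonneg (b := (1 / 2) * (d ⬝ᵥ (Q *ᵥ d))) fun s hs hs1 => ?_
  have hnonneg : 0 ≤ l + s • d := fun i => by
    have h1 := hl i
    have h2 := hd i
    simp only [Pi.zero_apply, Pi.add_apply, Pi.smul_apply, smul_eq_mul] at *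
    nlinarith
  have key := hmin _ hnonneg
  have hsymm : l ⬝ᵥ (Q *ᵥ d) = d ⬝ᵥ (Q *ᵥ l) := by
    rw [dotProduct_mulVec, ← mulVec_transpose, hQ.eq, dotProduct_comm]
  simp only [mulVec_add, mulVec_smul, dotProduct_add, add_dotProduct, smul_dotProduct,
    dotProduct_smul, smul_eq_mul, hsymm] at key ⊢
  linarith

/-- Complementarity conditions at a minimizer of a quadratic over the nonnegative orthant. -/
lemma quad_complementarity {m : ℕ} {Q : Matrix (Fin m) (Fin m) ℝ} (hQ : Q.IsSymm)
    {q l : Fin m → ℝ} (hl : 0 ≤ l)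
    (hmin : ∀ μ : Fin m → ℝ, 0 ≤ μ →
      (1 / 2) * (l ⬝ᵥ (Q *ᵥ l)) + l ⬝ᵥ q ≤ (1 / 2) * (μ ⬝ᵥ (Q *ᵥ μ)) + μ ⬝ᵥ q) :
    0 ≤ Q *ᵥ l + q ∧ l ⬝ᵥ (Q *ᵥ l + q) ≤ 0 := by
  constructor
  · intro i
    have h1 : (0 : Fin m → ℝ) ≤ Pi.single i 1 := Pi.single_nonneg.2 zero_le_one
    simpa [single_dotProduct] using quad_direction_nonneg hQ hl hmin (add_nonneg hl h1)
  · have h1 := quad_direction_nonneg hQ hl hmin (d := -l) (by simp)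
    rw [neg_dotProduct] at h1
    linarith

/-- The forward-Euler discretization of the inequality-constrained feedback-linearization
dynamics (with `K = (1/η) I`, and `λ_t` a minimizer of the dual quadratic program over the
nonnegative orthant) is exactly the unique minimizer of the SQP subproblem with linearized
inequality constraints. -/
theorem stmt_5
    {n m : ℕ}
    (f : (Fin n → ℝ) → ℝ) (h : (Fin n → ℝ) → (Fin m → ℝ))
    (gradf : (Fin n → ℝ) → (Fin n → ℝ))
    (J : (Fin n → ℝ) → Matrix (Fin m) (Fin n) ℝ)
    (hgrad : ∀ p, HasFDerivAt f (dotCLM (gradf p)) p)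
    (hJac : ∀ p, HasFDerivAt h (mulVecCLM (J p)) p)
    (xt : Fin n → ℝ)
    (Tt : Matrix (Fin n) (Fin n) ℝ) (hTtsymm : Tt.IsSymm) (hTt : Tt.PosDef)
    (η : ℝ) (hη : 0 < η)
    (hfeas : ∃ y : Fin n → ℝ, h xt + J xt *ᵥ (y - xt) ≤ 0)
    (lamt : Fin m → ℝ) (hlamt_nonneg : 0 ≤ lamt)
    (hlamt_min : ∀ μ : Fin m → ℝ, 0 ≤ μ →
      (1 / 2) * (lamt ⬝ᵥ ((J xt * Tt * (J xt)ᵀ) *ᵥ lamt)) +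
          lamt ⬝ᵥ ((J xt * Tt) *ᵥ gradf xt - (1 / η) • h xt) ≤
        (1 / 2) * (μ ⬝ᵥ ((J xt * Tt * (J xt)ᵀ) *ᵥ μ)) +
          μ ⬝ᵥ ((J xt * Tt) *ᵥ gradf xt - (1 / η) • h xt))
    (xnext : Fin n → ℝ)
    (hxnext : xnext = xt - η • (Tt *ᵥ (gradf xt + (J xt)ᵀ *ᵥ lamt))) :
    (h xt + J xt *ᵥ (xnext - xt) ≤ 0) ∧
    (∀ y : Fin n → ℝ, h xt + J xt *ᵥ (y - xt) ≤ 0 → y ≠ xnext →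
      gradf xt ⬝ᵥ (xnext - xt) +
          (1 / (2 * η)) * ((xnext - xt) ⬝ᵥ (Tt⁻¹ *ᵥ (xnext - xt))) <
        gradf xt ⬝ᵥ (y - xt) +
          (1 / (2 * η)) * ((y - xt) ⬝ᵥ (Tt⁻¹ *ᵥ (y - xt)))) := by
  have hQ : (J xt * Tt * (J xt)ᵀ).IsSymm := by
    simp [Matrix.IsSymm, transpose_mul, hTtsymm.eq, Matrix.mul_assoc]
  obtain ⟨hG, hcomp⟩ := quad_complementarity hQ hlamt_nonneg hlamt_min
  set e := xnext - xt with he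
  have he' : e = -(η • (Tt *ᵥ (gradf xt + (J xt)ᵀ *ᵥ lamt))) := by
    rw [he, hxnext]; abel
  -- The linearized constraint at `xnext` is `-η` times the gradient of the dual objective.
  have hc : h xt + J xt *ᵥ e = -(η • ((J xt * Tt * (J xt)ᵀ) *ᵥ lamt +
      ((J xt * Tt) *ᵥ gradf xt - (1 / η) • h xt))) := by
    rw [he']
    simp only [mulVec_neg, mulVec_smul, mulVec_add, mulVec_mulVec, smul_add, smul_sub, smul_smul,
      Matrix.mul_assoc]
    rw [mul_one_div_cancel hη.ne', one_smul]
    abel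
  have hdet : IsUnit Tt.det := hTt.det_pos.ne'.isUnit
  have hinv : Tt⁻¹ *ᵥ e = -(η • (gradf xt + (J xt)ᵀ *ᵥ lamt)) := by
    rw [he', mulVec_neg, mulVec_smul, mulVec_mulVec, nonsing_inv_mul _ hdet, one_mulVec]
  refine ⟨?_, fun y hy hne => ?_⟩
  · rw [hc]
    exact neg_nonpos.2 (smul_nonneg hη.le hG)
  · obtain ⟨w, hw⟩ : ∃ w, w = y - xnext := ⟨_, rfl⟩
    have hw0 : w ≠ 0 := by rw [hw]; exact sub_ne_zero.2 hne
    have hye : y - xt = e + w := by rw [hw, he]; abel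
    have hpos : 0 < w ⬝ᵥ (Tt⁻¹ *ᵥ w) := by simpa using hTt.inv.dotProduct_mulVec_pos hw0
    have hsymm : e ⬝ᵥ (Tt⁻¹ *ᵥ w) = w ⬝ᵥ (Tt⁻¹ *ᵥ e) := by
      rw [dotProduct_mulVec, ← mulVec_transpose, transpose_nonsing_inv, hTtsymm.eq,
        dotProduct_comm]
    have hslack : 0 ≤ lamt ⬝ᵥ (h xt + J xt *ᵥ e) := by
      rw [hc, dotProduct_neg, dotProduct_smul, smul_eq_mul]
      nlinarith
    have hle : lamt ⬝ᵥ (h xt + J xt *ᵥ (e + w)) ≤ 0 := by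
      rw [← hye]
      have := dotProduct_le_dotProduct_of_nonneg_left hy hlamt_nonneg
      simpa using this
    have hJw : lamt ⬝ᵥ (J xt *ᵥ w) ≤ 0 := by
      rw [mulVec_add, ← add_assoc, dotProduct_add] at hle
      linarith
    have hadj : w ⬝ᵥ ((J xt)ᵀ *ᵥ lamt) = lamt ⬝ᵥ (J xt *ᵥ w) := by
      rw [mulVec_transpose, dotProduct_comm, ← dotProduct_mulVec]
    have hcross : w ⬝ᵥ (Tt⁻¹ *ᵥ e) = -(η * (gradf xt ⬝ᵥ w + lamt ⬝ᵥ (J xt *ᵥ w))) := by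
      rw [hinv, dotProduct_neg, dotProduct_smul, dotProduct_add, hadj, smul_eq_mul,
        dotProduct_comm w]
    rw [hye]
    simp only [mulVec_add, dotProduct_add, add_dotProduct, hsymm, hcross]
    have hq : 0 < 1 / (2 * η) * (w ⬝ᵥ (Tt⁻¹ *ᵥ w)) := by positivity
    have hη' : 1 / (2 * η) * η = 1 / 2 := by field_simp
    linear_combination hq + hJw +
      (2 * (gradf xt ⬝ᵥ w + lamt ⬝ᵥ (J xt *ᵥ w))) * hη'
end
end

section
/- Let x : [0,∞) → ℝⁿ be a solution of the inequality-constrained feedback-linearization dynamics ẋ(t) = -T(x(t))(∇f(x(t)) + J_h(x(t))ᵀ λ(t)), where for each t, λ(t) minimizes over {λ ∈ ℝᵐ : λ ≥ 0} the function (1/2) λᵀ J_h(x(t))T(x(t))J_h(x(t))ᵀ λ + λᵀ( J_h(x(t))T(x(t))∇f(x(t)) - K h(x(t)) ), with K = diag(k₁,…,k_m), k_i > 0. Then for each i ∈ {1,…,m} and each t ≥ 0, d/dt h_i(x(t)) ≤ -k_i h_i(x(t)); consequently h_i(x(t)) ≤ e^{-k_i t} max{h_i(x(0)), 0} for all t ≥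 0, so the trajectory converges to the feasible set {x : h(x) ≤ 0}. -/
/-!
The minimality of `lam t` enters only through the KKT stationarity inequality: perturbing the
minimizer `lam` of `(1/2) lamᵀ Q lam + lamᵀ b` over the nonnegative orthant in the feasible
direction `eᵢ` gives `0 ≤ (Q lam + b)ᵢ` (`quadratic_min_stationarity`). For `Q = J T Jᵀ` and
`b = J T ∇f - K h`, the chain rule gives `d/dt hᵢ(x(t)) = -(Q lam + b)ᵢ - kᵢ hᵢ(x(t))`, which is
therefore at most `-kᵢ hᵢ(x(t))`. The exponential bound is then Grönwall's inequality
(`le_exp_mul_of_deriv_le`): `s ↦ e^{kᵢ s} hᵢ(x(s))` is antitone on `[0, ∞)`.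
-/

open Matrix Filter Set

noncomputable section

/-- First-order optimality on the nonnegative orthant: every partial derivative of the quadratic
is nonnegative at a minimizer. Convexity of the quadratic is not needed. -/
theorem quadratic_min_stationarity {m : ℕ} (Q : Matrix (Fin m) (Fin m) ℝ) (hQ : Qᵀ = Q)
    (b l : Fin m → ℝ) (hl : 0 ≤ l)
    (hmin : ∀ μ : Fin m → ℝ, 0 ≤ μ →
      (1 / 2) * (l ⬝ᵥ (Q *ᵥ l)) + l ⬝ᵥ b ≤ (1 / 2) * (μ ⬝ᵥ (Q *ᵥ μ)) + μ ⬝ᵥ b) (i : Fin m) :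
    0 ≤ (Q *ᵥ l) i + b i := by
  have key : ∀ ε : ℝ, 0 < ε → 0 ≤ ((Q *ᵥ l) i + b i) + ε * (Q i i / 2) := by
    intro ε hε
    have he : (0 : Fin m → ℝ) ≤ Pi.single i 1 := Pi.single_nonneg.2 zero_le_one
    have h1 := hmin (l + ε • Pi.single i 1) (add_nonneg hl (smul_nonneg hε.le he))
    have h2 : l ⬝ᵥ (Q *ᵥ Pi.single i 1) = (Q *ᵥ l) i := by
      rw [dotProduct_mulVec, ← mulVec_transpose, hQ, dotProduct_single_one]
    have h3 : (Pi.single i 1 : Fin m → ℝ) ⬝ᵥ (Q *ᵥ Pi.single i 1) = Q i i := by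
      simp
    simp only [mulVec_add, mulVec_smul, dotProduct_add, add_dotProduct, smul_dotProduct,
      dotProduct_smul, h2, h3, single_one_dotProduct, smul_eq_mul] at h1
    have h4 : 0 ≤ ε * (((Q *ᵥ l) i + b i) + ε * (Q i i / 2)) := by linarith
    exact nonneg_of_mul_nonneg_right h4 hε
  have hlim : Tendsto (fun ε : ℝ => ((Q *ᵥ l) i + b i) + ε * (Q i i / 2))
      (nhdsWithin 0 (Ioi 0)) (nhds ((Q *ᵥ l) i + b i)) := by
    have hc : Continuous (fun ε : ℝ => ((Q *ᵥ l) i + b i) + ε * (Q i i / 2)) := by fun_prop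
    simpa using (hc.tendsto 0).mono_left nhdsWithin_le_nhds
  exact ge_of_tendsto hlim (eventually_mem_nhdsWithin.mono key)

/-- A Grönwall inequality on `[0, ∞)` for scalar functions of arbitrary sign. -/
theorem le_exp_mul_of_deriv_le (g g' : ℝ → ℝ) (c : ℝ)
    (hg : ∀ t, 0 ≤ t → HasDerivAt g (g' t) t) (hle : ∀ t, 0 ≤ t → g' t ≤ -c * g t)
    (t : ℝ) (ht : 0 ≤ t) : g t ≤ Real.exp (-c * t) * g 0 := by
  have hd : ∀ s, 0 ≤ s → HasDerivAt (fun s => Real.exp (c * s) * g s)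
      (Real.exp (c * s) * (c * g s + g' s)) s := by
    intro s hs
    have h1 : HasDerivAt (fun s : ℝ => Real.exp (c * s)) (Real.exp (c * s) * (c * 1)) s :=
      ((hasDerivAt_id s).const_mul c).exp
    refine (h1.mul (hg s hs)).congr_deriv ?_
    ring
  have hanti : AntitoneOn (fun s => Real.exp (c * s) * g s) (Ici 0) := by
    refine antitoneOn_of_deriv_nonpos (convex_Ici 0)
      (fun s hs => (hd s hs).continuousAt.continuousWithinAt) ?_ ?_
    · intro s hs
      exact (hd s (interior_subset hs)).differentiableAt.differentiableWithinAt
    · intro s hs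
      rw [(hd s (interior_subset hs)).deriv]
      have := hle s (interior_subset hs)
      exact mul_nonpos_of_nonneg_of_nonpos (Real.exp_pos _).le (by linarith)
  have h0 : Real.exp (c * t) * g t ≤ g 0 := by
    simpa using hanti self_mem_Ici (mem_Ici.2 ht) ht
  calc g t = Real.exp (-c * t) * (Real.exp (c * t) * g t) := by
        rw [← mul_assoc, ← Real.exp_add]; simp
    _ ≤ _ := mul_le_mul_of_nonneg_left h0 (Real.exp_pos _).le

/-- Inequality-constrained feedback linearization: along the trajectory each constraint
value satisfies `d/dt hᵢ(x(t)) ≤ -kᵢ hᵢ(x(t))`, hence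
`hᵢ(x(t)) ≤ e^{-kᵢ t} max{hᵢ(x(0)), 0}`, so the dynamics converge to the feasible set. -/
theorem stmt_6
    {n m : ℕ}
    (f : (Fin n → ℝ) → ℝ) (h : (Fin n → ℝ) → (Fin m → ℝ))
    (gradf : (Fin n → ℝ) → (Fin n → ℝ))
    (J : (Fin n → ℝ) → Matrix (Fin m) (Fin n) ℝ)
    (T : (Fin n → ℝ) → Matrix (Fin n) (Fin n) ℝ)
    (hT : ∀ p, (T p).IsSymm ∧ (T p).PosDef)
    (hgrad : ∀ p, HasFDerivAt f (dotCLM (gradf p)) p)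
    (hJac : ∀ p, HasFDerivAt h (mulVecCLM (J p)) p)
    (k : Fin m → ℝ) (hk : ∀ i, 0 < k i)
    (x : ℝ → (Fin n → ℝ)) (lam : ℝ → (Fin m → ℝ))
    (hlam_nonneg : ∀ t, 0 ≤ t → 0 ≤ lam t)
    (hlam_min : ∀ t, 0 ≤ t → ∀ μ : Fin m → ℝ, 0 ≤ μ →
      (1 / 2) * (lam t ⬝ᵥ ((J (x t) * T (x t) * (J (x t))ᵀ) *ᵥ lam t)) +
          lam t ⬝ᵥ ((J (x t) * T (x t)) *ᵥ gradf (x t) - Matrix.diagonal k *ᵥ h (x t)) ≤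
        (1 / 2) * (μ ⬝ᵥ ((J (x t) * T (x t) * (J (x t))ᵀ) *ᵥ μ)) +
          μ ⬝ᵥ ((J (x t) * T (x t)) *ᵥ gradf (x t) - Matrix.diagonal k *ᵥ h (x t)))
    (hx : ∀ t, 0 ≤ t →
      HasDerivAt x (-(T (x t) *ᵥ (gradf (x t) + (J (x t))ᵀ *ᵥ lam t))) t) :
    (∀ i, ∀ t, 0 ≤ t →
      deriv (fun s => h (x s) i) t ≤ -(k i) * h (x t) i) ∧
    (∀ i, ∀ t, 0 ≤ t →
      h (x t) i ≤ Real.exp (-(k i) * t) * max (h (x 0) i) 0) := by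
  have hderiv : ∀ i, ∀ t, 0 ≤ t → HasDerivAt (fun s => h (x s) i)
      ((J (x t) *ᵥ (-(T (x t) *ᵥ (gradf (x t) + (J (x t))ᵀ *ᵥ lam t)))) i) t := fun i t ht =>
    hasDerivAt_pi.1 ((hJac (x t)).comp_hasDerivAt t (hx t ht)) i
  have hle : ∀ i, ∀ t, 0 ≤ t →
      (J (x t) *ᵥ (-(T (x t) *ᵥ (gradf (x t) + (J (x t))ᵀ *ᵥ lam t)))) i
        ≤ -(k i) * h (x t) i := by
    intro i t ht
    have hQ : (J (x t) * T (x t) * (J (x t))ᵀ)ᵀ = J (x t) * T (x t) * (J (x t))ᵀ := by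
      rw [transpose_mul, transpose_mul, transpose_transpose, (hT (x t)).1.eq, Matrix.mul_assoc]
    have hs := quadratic_min_stationarity _ hQ _ (lam t) (hlam_nonneg t ht) (hlam_min t ht) i
    have heq : J (x t) *ᵥ (-(T (x t) *ᵥ (gradf (x t) + (J (x t))ᵀ *ᵥ lam t))) =
        -((J (x t) * T (x t)) *ᵥ gradf (x t) +
          (J (x t) * T (x t) * (J (x t))ᵀ) *ᵥ lam t) := by
      simp only [mulVec_neg, mulVec_add, mulVec_mulVec, Matrix.mul_assoc]
    rw [heq]
    simp only [Pi.sub_apply, Pi.neg_apply, Pi.add_apply, mulVec_diagonal] at hs ⊢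
    linarith
  refine ⟨fun i t ht => (hderiv i t ht).deriv ▸ hle i t ht, fun i t ht => ?_⟩
  exact (le_exp_mul_of_deriv_le _ _ (k i) (hderiv i) (hle i) t ht).trans
    (mul_le_mul_of_nonneg_left (le_max_left _ _) (Real.exp_pos _).le)
end
end

section
/- Let A ∈ ℝ^{m×n} have full row rank (so AAᵀ is invertible) and b ∈ ℝᵐ, and suppose the affine subspace S := {x ∈ ℝⁿ : Ax + b = 0} is nonempty. Then for every y ∈ ℝⁿ, the Euclidean orthogonal projection of y onto S equals (I - Aᵀ(AAᵀ)⁻¹A) y - Aᵀ(AAᵀ)⁻¹ b. Consequently, for any differentiable f : ℝⁿ → ℝ and η > 0, the forward-Euler feedback-linearization step with affine constraints h(x) = Ax + b, T = I, and K = (1/η)I, namely x_{t+1} = x_t - η∇f(x_t) + η Aᵀ(AAᵀ)⁻¹( A∇f(x_t) - (1/η)(A x_t + b) ), equals the projected gradient descent step Proj_S( x_t - η∇f(x_t) ). -/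
/-!
Writing `p = y - Aᵀ(AAᵀ)⁻¹(A y + b)`, one has `A p + b = 0` because `AAᵀ` cancels its inverse, and
`y - p` lies in the row space of `A`, hence is orthogonal to `ker A`, the direction of the affine
subspace. By Pythagoras `p` is the unique closest point. The claim about the gradient step is the
same formula at `y = x - η ∇f(x)`, whose residual `A y + b` equals
`-η (A ∇f(x) - (1/η)(A x + b))`.
-/

open Matrix Filter Set

noncomputable section

/-- The affine map of the theorem sends `y` to `y` minus a correction in the row space of `A`,
namely `Aᵀ` applied to `(AAᵀ)⁻¹` of the residual `A y + b`. -/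
lemma affineProj_eq {n m : ℕ} (A : Matrix (Fin m) (Fin n) ℝ) (b : Fin m → ℝ) (y : Fin n → ℝ) :
    ((1 : Matrix (Fin n) (Fin n) ℝ) - Aᵀ * (A * Aᵀ)⁻¹ * A) *ᵥ y - (Aᵀ * (A * Aᵀ)⁻¹) *ᵥ b =
      y - Aᵀ *ᵥ ((A * Aᵀ)⁻¹ *ᵥ (A *ᵥ y + b)) := by
  simp only [sub_mulVec, one_mulVec, mulVec_add, mulVec_mulVec, Matrix.mul_assoc]
  abel

/-- Pythagoras: if `p` is `y` moved along the row space of `A`, then `y - p` is orthogonal to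
`p - w` whenever `A p = A w`, so `p` is strictly closer to `y` than any other such `w`. -/
lemma euclNorm_sub_lt {n m : ℕ} (A : Matrix (Fin m) (Fin n) ℝ) (z : Fin m → ℝ)
    (y p w : Fin n → ℝ) (hp : y - p = Aᵀ *ᵥ z) (hw : A *ᵥ p = A *ᵥ w) (hne : w ≠ p) :
    euclNorm (y - p) < euclNorm (y - w) := by
  have horth : (y - p) ⬝ᵥ (p - w) = 0 := by
    rw [hp, mulVec_transpose, ← dotProduct_mulVec, mulVec_sub, hw, sub_self, dotProduct_zero]
  have hpos : 0 < (p - w) ⬝ᵥ (p - w) := by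
    refine lt_of_le_of_ne (Finset.sum_nonneg fun i _ => mul_self_nonneg _) fun h => ?_
    exact hne (sub_eq_zero.mp (dotProduct_self_eq_zero.mp h.symm)).symm
  have hsq (v : Fin n → ℝ) : ∑ i, v i ^ 2 = v ⬝ᵥ v := by simp only [dotProduct, sq]
  have hsplit : (y - w) ⬝ᵥ (y - w) = (y - p) ⬝ᵥ (y - p) + (p - w) ⬝ᵥ (p - w) := by
    rw [← sub_add_sub_cancel y p w, add_dotProduct, dotProduct_add, dotProduct_add,
      dotProduct_comm (p - w) (y - p), horth]
    ring
  unfold euclNorm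
  refine Real.sqrt_lt_sqrt (Finset.sum_nonneg fun i _ => sq_nonneg _) ?_
  rw [hsq, hsq, hsplit]
  linarith

/-- Projection onto an affine subspace `{x : Ax + b = 0}` is given by
`y ↦ (I - Aᵀ(AAᵀ)⁻¹A)y - Aᵀ(AAᵀ)⁻¹b`; consequently, the forward-Euler
feedback-linearization step with affine constraints (`T = I`, `K = (1/η)I`) is exactly a
projected gradient descent step. -/
theorem stmt_17
    {n m : ℕ}
    (A : Matrix (Fin m) (Fin n) ℝ) (b : Fin m → ℝ)
    (hA : IsUnit (A * Aᵀ))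
    (hS : ∃ x : Fin n → ℝ, A *ᵥ x + b = 0)
    (f : (Fin n → ℝ) → ℝ) (gradf : (Fin n → ℝ) → (Fin n → ℝ))
    (hgrad : ∀ p, HasFDerivAt f (dotCLM (gradf p)) p)
    (η : ℝ) (hη : 0 < η) :
    (∀ y : Fin n → ℝ,
      (A *ᵥ (((1 : Matrix (Fin n) (Fin n) ℝ) - Aᵀ * (A * Aᵀ)⁻¹ * A) *ᵥ y -
          (Aᵀ * (A * Aᵀ)⁻¹) *ᵥ b) + b = 0) ∧
      (∀ w : Fin n → ℝ, A *ᵥ w + b = 0 →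
        w ≠ ((1 : Matrix (Fin n) (Fin n) ℝ) - Aᵀ * (A * Aᵀ)⁻¹ * A) *ᵥ y -
            (Aᵀ * (A * Aᵀ)⁻¹) *ᵥ b →
        euclNorm (y - (((1 : Matrix (Fin n) (Fin n) ℝ) - Aᵀ * (A * Aᵀ)⁻¹ * A) *ᵥ y -
            (Aᵀ * (A * Aᵀ)⁻¹) *ᵥ b)) < euclNorm (y - w))) ∧
    (∀ xt : Fin n → ℝ,
      xt - η • (gradf xt -
          Aᵀ *ᵥ ((A * Aᵀ)⁻¹ *ᵥ (A *ᵥ gradf xt - (1 / η) • (A *ᵥ xt + b)))) =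
        ((1 : Matrix (Fin n) (Fin n) ℝ) - Aᵀ * (A * Aᵀ)⁻¹ * A) *ᵥ (xt - η • gradf xt) -
          (Aᵀ * (A * Aᵀ)⁻¹) *ᵥ b) := by
  have hdet : IsUnit (A * Aᵀ).det := (isUnit_iff_isUnit_det _).mp hA
  have hmem (y : Fin n → ℝ) :
      A *ᵥ (y - Aᵀ *ᵥ ((A * Aᵀ)⁻¹ *ᵥ (A *ᵥ y + b))) + b = 0 := by
    rw [mulVec_sub, mulVec_mulVec, mulVec_mulVec, mul_nonsing_inv _ hdet, one_mulVec]
    abel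
  refine ⟨fun y => ?_, fun xt => ?_⟩
  · rw [affineProj_eq]
    refine ⟨hmem y, fun w hw hne => ?_⟩
    exact euclNorm_sub_lt A _ y _ w (sub_sub_cancel _ _)
      (add_right_cancel ((hmem y).trans hw.symm)) hne
  · rw [affineProj_eq]
    -- The residual of the gradient step is `-η` times the bracket multiplied by `(AAᵀ)⁻¹`.
    have hres : A *ᵥ (xt - η • gradf xt) + b =
        -(η • (A *ᵥ gradf xt - (1 / η) • (A *ᵥ xt + b))) := by
      rw [smul_sub, smul_smul, mul_one_div_cancel hη.ne', one_smul, mulVec_sub, mulVec_smul]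
      abel
    rw [hres, mulVec_neg, mulVec_neg, mulVec_smul, mulVec_smul, smul_sub]
    abel
end
end

section
/- Let x : [0,∞) → ℝⁿ be a solution of the feedback-linearization dynamics ẋ(t) = -T(x(t))(∇f(x(t)) + J_h(x(t))ᵀ λ(t)) with λ(t) = -(J_h(x(t))T(x(t))J_h(x(t))ᵀ)⁻¹(J_h(x(t))T(x(t))∇f(x(t)) - K h(x(t))), K = diag(k₁,…,k_m), k_i > 0. Assume ‖∇f(x)‖ < M, ‖J_h(x)‖ < M, (J_h(x)J_h(x)ᵀ)⁻¹ ≺ D² I, and λ_min I ⪯ T(x) ⪯ λ_max I for all x. Define P(x) := T(x) - T(x)J_h(x)ᵀ(J_h(x)T(x)J_h(x)ᵀ)⁻¹ J_h(x)T(x). Then for all t ≥ 0, d/dt f(x(t)) ≤ -∇f(x(t))ᵀ P(x(t)) ∇f(x(t)) + (λ_max/λ_min)(MD)² Σ_{i=1}^m k_i |h_i(x(t))|, and the matrix P(x) is positive semidefinite and satisfies P(x)T(x)⁻¹P(x) = P(x). -/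
/-!
Write `g = ∇f(x)`, `S = J T Jᵀ`, `P = T - T Jᵀ S⁻¹ J T`. Substituting the multiplier into the dynamics,
the chain rule gives the exact identity `d/dt f(x(t)) = -gᵀ P g - gᵀ T Jᵀ u` with `u = S⁻¹ K h`,
so everything rests on bounding `gᵀ T Jᵀ u`. Three estimates give this:

* `|a ⬝ T b| ≤ λ_max |a| |b|`, the Cauchy-Schwarz inequality for the semi-inner product of `T`
  (`abs_dot_mulVec_le`);
* `|Jᵀ u| ≤ M |u|`, by duality from the operator norm of `J` (`euclNorm_transpose_mulVec_le`);
* `λ_min |u| ≤ D² |S u|`, because `(J Jᵀ)⁻¹ ≺ D²` gives `|u|² ≤ D² |Jᵀ u|²`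
  while `λ_min |Jᵀ u|² ≤ u ⬝ S u` (`coercive`).

Finally `|K h|₂ ≤ |K h|₁ = ∑ kᵢ |hᵢ|`. For the algebraic claims, put `Q = Jᵀ S⁻¹ J`;
then `Q T Q = Q`, so that `P = (1 - T Q) T (1 - T Q)ᵀ` is positive semidefinite
and `P T⁻¹ P = (1 - T Q) P = P`.
-/

open Matrix Filter Set

noncomputable section

lemma abs_dot_le {n : ℕ} (v w : Fin n → ℝ) : |v ⬝ᵥ w| ≤ euclNorm v * euclNorm w := by
  apply abs_le_of_sq_le_sq _ (mul_nonneg (euclNorm_nonneg v) (euclNorm_nonneg w))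
  rw [mul_pow, euclNorm_sq, euclNorm_sq]
  simpa [dotProduct, sq] using Finset.sum_mul_sq_le_sq_mul_sq Finset.univ v w

lemma dot_transpose_mulVec {m n : ℕ} (A : Matrix (Fin m) (Fin n) ℝ) (v : Fin n → ℝ)
    (u : Fin m → ℝ) : v ⬝ᵥ (Aᵀ *ᵥ u) = u ⬝ᵥ (A *ᵥ v) := by
  rw [Matrix.mulVec_transpose, dotProduct_comm, Matrix.dotProduct_mulVec]

lemma euclNorm_transpose_mulVec_le {m n : ℕ} (A : Matrix (Fin m) (Fin n) ℝ) (u : Fin m → ℝ) :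
    euclNorm (Aᵀ *ᵥ u) ≤ matOpNorm A * euclNorm u := by
  set q := Aᵀ *ᵥ u with hq
  have h1 : euclNorm q ^ 2 ≤ euclNorm u * (matOpNorm A * euclNorm q) := by
    rw [euclNorm_sq]
    nth_rewrite 2 [hq]
    rw [dot_transpose_mulVec]
    exact (le_abs_self _).trans ((abs_dot_le _ _).trans
      (mul_le_mul_of_nonneg_left (euclNorm_mulVec_le A q) (euclNorm_nonneg u)))
  have h0 : 0 ≤ matOpNorm A := norm_nonneg _
  rcases (euclNorm_nonneg q).eq_or_lt with h2 | h2
  · rw [← h2]; exact mul_nonneg h0 (euclNorm_nonneg u)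
  · nlinarith

/-- The Euclidean norm is dominated by the `ℓ¹` norm. -/
lemma euclNorm_le_sum_abs {n : ℕ} (v : Fin n → ℝ) : euclNorm v ≤ ∑ i, |v i| := by
  apply Real.sqrt_le_iff.mpr ⟨Finset.sum_nonneg fun i _ => abs_nonneg _, ?_⟩
  simpa using Finset.sum_sq_le_sq_sum_of_nonneg (s := Finset.univ) (f := fun i => |v i|)
    fun i _ => abs_nonneg _

lemma dot_mulVec_nonneg {n : ℕ} {A : Matrix (Fin n) (Fin n) ℝ} (hA : A.PosSemidef)
    (v : Fin n → ℝ) : 0 ≤ v ⬝ᵥ (A *ᵥ v) := by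
  simpa using hA.dotProduct_mulVec_nonneg v

/-- Cauchy-Schwarz for the semi-inner product of `0 ⪯ T ⪯ L`. -/
lemma abs_dot_mulVec_le {n : ℕ} {T : Matrix (Fin n) (Fin n) ℝ} {L : ℝ} (hL : 0 ≤ L)
    (hT : T.PosSemidef) (hTs : T.IsSymm) (hub : (L • (1 : Matrix (Fin n) (Fin n) ℝ) - T).PosSemidef)
    (a b : Fin n → ℝ) : |a ⬝ᵥ (T *ᵥ b)| ≤ L * euclNorm a * euclNorm b := by
  have hupper (v : Fin n → ℝ) : v ⬝ᵥ (T *ᵥ v) ≤ L * euclNorm v ^ 2 := by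
    have := dot_mulVec_nonneg hub v
    rw [sub_mulVec, smul_mulVec, one_mulVec, dotProduct_sub, dotProduct_smul, smul_eq_mul,
      ← euclNorm_sq] at this
    linarith
  have hsym : b ⬝ᵥ (T *ᵥ a) = a ⬝ᵥ (T *ᵥ b) := by
    rw [← dot_transpose_mulVec, hTs.eq]
  have hdisc := discrim_le_zero (a := a ⬝ᵥ (T *ᵥ a)) (b := 2 * (a ⬝ᵥ (T *ᵥ b)))
    (c := b ⬝ᵥ (T *ᵥ b)) (fun s => by
      have := dot_mulVec_nonneg hT (s • a + b)
      simp only [mulVec_add, mulVec_smul, dotProduct_add, add_dotProduct, dotProduct_smul,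
        smul_dotProduct, smul_eq_mul, hsym] at this
      linarith)
  have ha := euclNorm_nonneg a
  have hb := euclNorm_nonneg b
  refine abs_le_of_sq_le_sq ?_ (by positivity)
  have hprod := mul_le_mul (hupper a) (hupper b) (dot_mulVec_nonneg hT b) (by positivity)
  unfold discrim at hdisc
  linarith

/-- If `(J Jᵀ)⁻¹ ≺ D²` then the least singular value of `Jᵀ` is at least `1 / D`. -/
lemma sq_le_of_inv_lt {m n : ℕ} (J : Matrix (Fin m) (Fin n) ℝ) {D : ℝ} (hu : IsUnit (J * Jᵀ))
    (hD : (D ^ 2 • (1 : Matrix (Fin m) (Fin m) ℝ) - (J * Jᵀ)⁻¹).PosDef) (u : Fin m → ℝ) :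
    euclNorm u ^ 2 ≤ D ^ 2 * euclNorm (Jᵀ *ᵥ u) ^ 2 := by
  set A := J * Jᵀ with hA
  have hquad (z : Fin m → ℝ) : z ⬝ᵥ (A *ᵥ z) = euclNorm (Jᵀ *ᵥ z) ^ 2 := by
    rw [hA, ← mulVec_mulVec, euclNorm_sq, dot_transpose_mulVec]
  have hdet : IsUnit A.det := (isUnit_iff_isUnit_det A).mp hu
  set v := A⁻¹ *ᵥ u with hv
  have hAv : A *ᵥ v = u := by rw [hv, mulVec_mulVec, mul_nonsing_inv _ hdet, one_mulVec]
  have hvu : u ⬝ᵥ v ≤ D ^ 2 * euclNorm u ^ 2 := by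
    have := dot_mulVec_nonneg hD.posSemidef u
    rw [sub_mulVec, smul_mulVec, one_mulVec, dotProduct_sub, dotProduct_smul, smul_eq_mul,
      ← euclNorm_sq] at this
    linarith
  have hAs : Aᵀ = A := by rw [hA, transpose_mul, transpose_transpose]
  have hvAu : v ⬝ᵥ (A *ᵥ u) = euclNorm u ^ 2 := by
    rw [← hAs, dot_transpose_mulVec, hAv, euclNorm_sq]
  -- Expand `0 ≤ (v - D² u) ⬝ A (v - D² u)`, where `A v = u`.
  have hexp : 0 ≤ (v - D ^ 2 • u) ⬝ᵥ (A *ᵥ (v - D ^ 2 • u)) := by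
    rw [hquad]; positivity
  simp only [mulVec_sub, mulVec_smul, dotProduct_sub, sub_dotProduct, dotProduct_smul,
    smul_dotProduct, smul_eq_mul, hAv, hvAu, hquad, dotProduct_comm v u, ← euclNorm_sq] at hexp
  rcases eq_or_ne D 0 with h0 | h0
  · -- For `D = 0` strict positivity leaves only `u = 0`.
    have hu0 : u = 0 := by
      by_contra hne
      have h1 := hD.dotProduct_mulVec_pos hne
      have h2 : u ⬝ᵥ v = euclNorm (Jᵀ *ᵥ v) ^ 2 := by rw [← hquad, hAv, dotProduct_comm]
      simp only [h0, star_trivial, sub_mulVec, dotProduct_sub] at h1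
      rw [← hv, h2] at h1
      simp at h1
      nlinarith [sq_nonneg (euclNorm (Jᵀ *ᵥ v))]
    rw [hu0]; simp [euclNorm]
  · have hpos : 0 < D ^ 2 := by positivity
    nlinarith

/-- The bound `‖(J T Jᵀ)⁻¹‖ ≤ D² / λ_min`, with the inverse and the division cleared. -/
lemma coercive {m n : ℕ} (J : Matrix (Fin m) (Fin n) ℝ) (T : Matrix (Fin n) (Fin n) ℝ)
    {D l : ℝ} (hl : 0 < l) (hu : IsUnit (J * Jᵀ))
    (hD : (D ^ 2 • (1 : Matrix (Fin m) (Fin m) ℝ) - (J * Jᵀ)⁻¹).PosDef)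
    (hlb : (T - l • (1 : Matrix (Fin n) (Fin n) ℝ)).PosSemidef) (u : Fin m → ℝ) :
    l * euclNorm u ≤ D ^ 2 * euclNorm ((J * T * Jᵀ) *ᵥ u) := by
  set w := (J * T * Jᵀ) *ᵥ u with hw
  have h1 := sq_le_of_inv_lt J hu hD u
  have h2 : l * euclNorm (Jᵀ *ᵥ u) ^ 2 ≤ u ⬝ᵥ w := by
    have := dot_mulVec_nonneg hlb (Jᵀ *ᵥ u)
    rw [sub_mulVec, smul_mulVec, one_mulVec, dotProduct_sub, dotProduct_smul, smul_eq_mul,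
      ← euclNorm_sq, dotProduct_comm, dot_transpose_mulVec, mulVec_mulVec, mulVec_mulVec] at this
    linarith
  have h3 := (le_abs_self _).trans (abs_dot_le u w)
  have h4 : l * euclNorm u ^ 2 ≤ D ^ 2 * (euclNorm u * euclNorm w) := by
    have e1 := mul_le_mul_of_nonneg_left h1 hl.le
    have e2 := mul_le_mul_of_nonneg_left (h2.trans h3) (sq_nonneg D)
    linarith
  have hw0 := euclNorm_nonneg w
  rcases (euclNorm_nonneg u).eq_or_lt with h0 | h0
  · rw [← h0, mul_zero]; positivity
  · exact le_of_mul_le_mul_right (by linarith) h0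

/-- The algebraic properties of the oblique projection `P`. -/
lemma projection_props {m n : ℕ} (J : Matrix (Fin m) (Fin n) ℝ) (T : Matrix (Fin n) (Fin n) ℝ)
    (hT : T.PosSemidef) (hTs : T.IsSymm) (hTu : IsUnit T.det)
    (hS : IsUnit (J * T * Jᵀ)) :
    (T - T * Jᵀ * (J * T * Jᵀ)⁻¹ * (J * T)).PosSemidef ∧
    (T - T * Jᵀ * (J * T * Jᵀ)⁻¹ * (J * T)) * T⁻¹ * (T - T * Jᵀ * (J * T * Jᵀ)⁻¹ * (J * T)) =
      T - T * Jᵀ * (J * T * Jᵀ)⁻¹ * (J * T) := by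
  set S := J * T * Jᵀ with hSd
  have hdet : IsUnit S.det := (isUnit_iff_isUnit_det S).mp hS
  have hSs : Sᵀ = S := by
    rw [hSd, transpose_mul, transpose_mul, transpose_transpose, hTs.eq, Matrix.mul_assoc]
  set Q := Jᵀ * S⁻¹ * J with hQ
  have hQT : Q * T * Q = Q := by
    calc Q * T * Q = Jᵀ * (S⁻¹ * S) * S⁻¹ * J := by
          rw [hQ, hSd]; simp only [Matrix.mul_assoc]
      _ = Q := by rw [nonsing_inv_mul _ hdet, Matrix.mul_one]
  have hQs : Qᵀ = Q := by
    rw [hQ, transpose_mul, transpose_mul, transpose_transpose, transpose_nonsing_inv, hSs,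
      Matrix.mul_assoc]
  have hP : T - T * Jᵀ * S⁻¹ * (J * T) = T - T * Q * T := by
    rw [hQ]; simp only [Matrix.mul_assoc]
  have hTQ : T * Q * T * Q * T = T * Q * T := by
    calc T * Q * T * Q * T = T * (Q * T * Q) * T := by simp only [Matrix.mul_assoc]
      _ = _ := by rw [hQT]
  rw [hP]
  constructor
  · have h := hT.mul_mul_conjTranspose_same (1 - T * Q)
    have e : (1 - T * Q) * T * (1 - T * Q)ᴴ = T - T * Q * T := by
      rw [conjTranspose_eq_transpose_of_trivial, transpose_sub, transpose_one, transpose_mul, hQs,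
        hTs.eq]
      simp only [sub_mul, mul_sub, one_mul, mul_one, ← mul_assoc, hTQ]
      abel
    rwa [e] at h
  · have e : (T - T * Q * T) * T⁻¹ = 1 - T * Q := by
      rw [sub_mul, mul_nonsing_inv _ hTu, mul_assoc, mul_nonsing_inv _ hTu, mul_one]
    rw [e]
    simp only [sub_mul, mul_sub, one_mul, ← mul_assoc, hTQ]
    abel

/-- Along the equality-constrained feedback-linearization dynamics,
`d/dt f(x(t)) ≤ -∇f(x)ᵀP(x)∇f(x) + (λ_max/λ_min)(MD)² Σᵢ kᵢ|hᵢ(x)|`, where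
`P(x) = T(x) - T(x)J_hᵀ(J_h T J_hᵀ)⁻¹ J_h T(x)` is positive semidefinite and satisfies
`P T⁻¹ P = P`. -/
theorem stmt_18
    {n m : ℕ}
    (f : (Fin n → ℝ) → ℝ) (h : (Fin n → ℝ) → (Fin m → ℝ))
    (gradf : (Fin n → ℝ) → (Fin n → ℝ))
    (J : (Fin n → ℝ) → Matrix (Fin m) (Fin n) ℝ)
    (T : (Fin n → ℝ) → Matrix (Fin n) (Fin n) ℝ)
    (lmin lmax : ℝ) (hlmin : 0 < lmin) (hminmax : lmin ≤ lmax)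
    (hTsymm : ∀ p, (T p).IsSymm)
    (hTlb : ∀ p, (T p - lmin • (1 : Matrix (Fin n) (Fin n) ℝ)).PosSemidef)
    (hTub : ∀ p, (lmax • (1 : Matrix (Fin n) (Fin n) ℝ) - T p).PosSemidef)
    (hgrad : ∀ p, HasFDerivAt f (dotCLM (gradf p)) p)
    (hJac : ∀ p, HasFDerivAt h (mulVecCLM (J p)) p)
    (M : ℝ) (hM : ∀ p, euclNorm (gradf p) < M ∧ matOpNorm (J p) < M)
    (D : ℝ) (hJJ : ∀ p, IsUnit (J p * (J p)ᵀ))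
    (hD : ∀ p, ((D ^ 2 • (1 : Matrix (Fin m) (Fin m) ℝ)) - (J p * (J p)ᵀ)⁻¹).PosDef)
    (k : Fin m → ℝ) (hk : ∀ i, 0 < k i)
    (x : ℝ → (Fin n → ℝ)) (lam : ℝ → (Fin m → ℝ))
    (hInv : ∀ t, 0 ≤ t → IsUnit (J (x t) * T (x t) * (J (x t))ᵀ))
    (hlam : ∀ t, 0 ≤ t →
      lam t = -((J (x t) * T (x t) * (J (x t))ᵀ)⁻¹ *ᵥ
        ((J (x t) * T (x t)) *ᵥ gradf (x t) - Matrix.diagonal k *ᵥ h (x t))))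
    (hx : ∀ t, 0 ≤ t →
      HasDerivAt x (-(T (x t) *ᵥ (gradf (x t) + (J (x t))ᵀ *ᵥ lam t))) t) :
    (∀ t, 0 ≤ t →
      deriv (fun s => f (x s)) t ≤
        -(gradf (x t) ⬝ᵥ
            ((T (x t) - T (x t) * (J (x t))ᵀ * (J (x t) * T (x t) * (J (x t))ᵀ)⁻¹ *
              (J (x t) * T (x t))) *ᵥ gradf (x t))) +
          lmax / lmin * (M * D) ^ 2 * ∑ i, k i * |h (x t) i|) ∧
    (∀ t, 0 ≤ t →
      (T (x t) - T (x t) * (J (x t))ᵀ * (J (x t) * T (x t) * (J (x t))ᵀ)⁻¹ *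
        (J (x t) * T (x t))).PosSemidef ∧
      (T (x t) - T (x t) * (J (x t))ᵀ * (J (x t) * T (x t) * (J (x t))ᵀ)⁻¹ *
          (J (x t) * T (x t))) * (T (x t))⁻¹ *
        (T (x t) - T (x t) * (J (x t))ᵀ * (J (x t) * T (x t) * (J (x t))ᵀ)⁻¹ *
          (J (x t) * T (x t))) =
      (T (x t) - T (x t) * (J (x t))ᵀ * (J (x t) * T (x t) * (J (x t))ᵀ)⁻¹ *
        (J (x t) * T (x t)))) := by
  have hT (p : Fin n → ℝ) : (T p).PosDef := by
    have h1 : (lmin • (1 : Matrix (Fin n) (Fin n) ℝ)).PosDef := Matrix.PosDef.one.smul hlmin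
    simpa using h1.add_posSemidef (hTlb p)
  refine ⟨fun t ht => ?_, fun t ht => projection_props (J (x t)) (T (x t)) (hT _).posSemidef
    (hTsymm _) ((isUnit_iff_isUnit_det _).mp (hT _).isUnit) (hInv t ht)⟩
  have hder := (hgrad (x t)).comp_hasDerivAt t (hx t ht)
  have hdot (a b : Fin n → ℝ) : dotCLM a b = a ⬝ᵥ b := by
    simp [dotCLM, dotProduct]
  have hval : deriv (fun s => f (x s)) t = _ := hder.deriv
  rw [hval, hdot, hlam t ht]
  have hM1 := (hM (x t)).1.le
  have hM2 := (hM (x t)).2.le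
  have hI := (isUnit_iff_isUnit_det _).mp (hInv t ht)
  have hco := coercive (J (x t)) (T (x t)) hlmin (hJJ _) (hD _) (hTlb _)
  have hcs := abs_dot_mulVec_le (hlmin.le.trans hminmax) (hT (x t)).posSemidef (hTsymm _) (hTub _)
  generalize J (x t) = A at *
  generalize T (x t) = B at *
  generalize gradf (x t) = g at *
  generalize h (x t) = y at *
  set S := A * B * Aᵀ with hS
  set w := diagonal k *ᵥ y with hw
  set u := S⁻¹ *ᵥ w with hu
  have hSu : S *ᵥ u = w := by rw [hu, mulVec_mulVec, mul_nonsing_inv _ hI, one_mulVec]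
  have hid : g ⬝ᵥ (-(B *ᵥ (g + Aᵀ *ᵥ -(S⁻¹ *ᵥ ((A * B) *ᵥ g - w))))) =
      -(g ⬝ᵥ ((B - B * Aᵀ * S⁻¹ * (A * B)) *ᵥ g)) - g ⬝ᵥ (B *ᵥ (Aᵀ *ᵥ u)) := by
    simp only [mulVec_sub, mulVec_add, mulVec_neg, sub_mulVec, dotProduct_neg, dotProduct_add,
      dotProduct_sub, hu, mulVec_mulVec, Matrix.mul_assoc]
    ring
  rw [hid]
  have hwsum : euclNorm w ≤ ∑ i, k i * |y i| := by
    refine (euclNorm_le_sum_abs w).trans (le_of_eq (Finset.sum_congr rfl fun i _ => ?_))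
    rw [hw, mulVec_diagonal, abs_mul, abs_of_pos (hk i)]
  have hM0 : 0 ≤ M := (euclNorm_nonneg g).trans hM1
  have hL0 : 0 ≤ lmax := hlmin.le.trans hminmax
  have hun : euclNorm u ≤ D ^ 2 * (∑ i, k i * |y i|) / lmin := by
    rw [le_div_iff₀ hlmin, mul_comm]
    have h1 := hco u
    rw [hSu] at h1
    exact h1.trans (mul_le_mul_of_nonneg_left hwsum (sq_nonneg D))
  have hq : euclNorm (Aᵀ *ᵥ u) ≤ M * (D ^ 2 * (∑ i, k i * |y i|) / lmin) :=
    (euclNorm_transpose_mulVec_le A u).trans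
      (mul_le_mul hM2 hun (euclNorm_nonneg u) hM0)
  have hfin : |g ⬝ᵥ (B *ᵥ (Aᵀ *ᵥ u))| ≤ lmax / lmin * (M * D) ^ 2 * ∑ i, k i * |y i| := by
    calc _ ≤ lmax * euclNorm g * euclNorm (Aᵀ *ᵥ u) := hcs _ _
      _ ≤ lmax * M * (M * (D ^ 2 * (∑ i, k i * |y i|) / lmin)) :=
        mul_le_mul (mul_le_mul_of_nonneg_left hM1 hL0) hq (euclNorm_nonneg _) (by positivity)
      _ = _ := by ring
  linarith [neg_abs_le (g ⬝ᵥ (B *ᵥ (Aᵀ *ᵥ u)))]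
end
end

section
/- Let x : [0,∞) → ℝⁿ solve the inequality-constrained feedback-linearization dynamics ẋ(t) = -T(x(t))(∇f(x(t)) + J_h(x(t))ᵀ λ(t)), where λ(t) ≥ 0 minimizes over {λ ≥ 0} the function (1/2) λᵀ J_h(x(t))T(x(t))J_h(x(t))ᵀ λ + λᵀ( J_h(x(t))T(x(t))∇f(x(t)) - K h(x(t)) ), with K = diag(k₁,…,k_m), k_i > 0. Then for all t ≥ 0, d/dt f(x(t)) = -‖∇f(x(t)) + J_h(x(t))ᵀλ(t)‖²_{T(x(t))} + λ(t)ᵀ K h(x(t)), where ‖v‖²_{T(x)} := vᵀ T(x) v. -/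
/-!
By the chain rule `d/dt f(x(t)) = -∇f ⬝ᵥ T v` with `v = ∇f + Jᵀ λ`, and `∇f = v - Jᵀ λ` turns this
into `-v ⬝ᵥ T v + λ ⬝ᵥ (J T Jᵀ λ + J T ∇f)`. The last term equals `λ ⬝ᵥ K h` by complementary
slackness. That follows from minimality of `λ` among its own rescalings `s • λ`, `s ≥ 0`: the
objective is a quadratic polynomial in `s`, minimal at the interior point `s = 1`
(`add_eq_zero_of_ray_min`).
-/

open Matrix Filter Set

noncomputable section

/-- First-order condition at `s = 1` for `s ↦ s² a / 2 + s b` minimized over `s ≥ 0`. -/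
lemma add_eq_zero_of_ray_min {a b : ℝ}
    (H : ∀ s : ℝ, 0 ≤ s → (1 / 2) * a + b ≤ (1 / 2) * (s ^ 2 * a) + s * b) : a + b = 0 := by
  have hD : 0 < |a| + |a + b| + 1 := by positivity
  set D := |a| + |a + b| + 1 with hDdef
  -- This step against the derivative `a + b` is short enough to keep `s` nonnegative and to
  -- make the quadratic term at most half of the linear one.
  have hs : 0 ≤ 1 - (a + b) / D := by
    rw [sub_nonneg, div_le_one hD]
    linarith [le_abs_self (a + b), abs_nonneg a]
  have h1 := H _ hs
  have h2 : 0 ≤ -(a + b) ^ 2 / D + (a + b) ^ 2 * a / (2 * D ^ 2) := by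
    have e : -(a + b) ^ 2 / D + (a + b) ^ 2 * a / (2 * D ^ 2) =
        (1 / 2) * ((1 - (a + b) / D) ^ 2 * a) + (1 - (a + b) / D) * b - ((1 / 2) * a + b) := by
      field_simp
      ring
    rw [e]
    linarith
  have h3 : -(a + b) ^ 2 / D + (a + b) ^ 2 * a / (2 * D ^ 2) =
      (a + b) ^ 2 * (a - 2 * D) / (2 * D ^ 2) := by
    field_simp
    ring
  rw [h3, le_div_iff₀ (by positivity), zero_mul] at h2
  have h4 : a - 2 * D < 0 := by linarith [le_abs_self a, abs_nonneg (a + b), abs_nonneg a]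
  have h5 : (a + b) ^ 2 = 0 := by nlinarith [sq_nonneg (a + b)]
  exact pow_eq_zero_iff two_ne_zero |>.1 h5

lemma dotCLM_apply {n : ℕ} (g v : Fin n → ℝ) : dotCLM g v = g ⬝ᵥ v := by
  simp [dotCLM, dotProduct]

/-- Along the inequality-constrained feedback-linearization dynamics,
`d/dt f(x(t)) = -‖∇f(x) + J_hᵀλ‖²_{T(x)} + λᵀ K h(x)`, where `‖v‖²_{T(x)} = vᵀT(x)v`. -/
theorem stmt_19
    {n m : ℕ}
    (f : (Fin n → ℝ) → ℝ) (h : (Fin n → ℝ) → (Fin m → ℝ))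
    (gradf : (Fin n → ℝ) → (Fin n → ℝ))
    (J : (Fin n → ℝ) → Matrix (Fin m) (Fin n) ℝ)
    (T : (Fin n → ℝ) → Matrix (Fin n) (Fin n) ℝ)
    (hT : ∀ p, (T p).IsSymm ∧ (T p).PosDef)
    (hgrad : ∀ p, HasFDerivAt f (dotCLM (gradf p)) p)
    (hJac : ∀ p, HasFDerivAt h (mulVecCLM (J p)) p)
    (k : Fin m → ℝ) (hk : ∀ i, 0 < k i)
    (x : ℝ → (Fin n → ℝ)) (lam : ℝ → (Fin m → ℝ))
    (hlam_nonneg : ∀ t, 0 ≤ t → 0 ≤ lam t)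
    (hlam_min : ∀ t, 0 ≤ t → ∀ μ : Fin m → ℝ, 0 ≤ μ →
      (1 / 2) * (lam t ⬝ᵥ ((J (x t) * T (x t) * (J (x t))ᵀ) *ᵥ lam t)) +
          lam t ⬝ᵥ ((J (x t) * T (x t)) *ᵥ gradf (x t) - Matrix.diagonal k *ᵥ h (x t)) ≤
        (1 / 2) * (μ ⬝ᵥ ((J (x t) * T (x t) * (J (x t))ᵀ) *ᵥ μ)) +
          μ ⬝ᵥ ((J (x t) * T (x t)) *ᵥ gradf (x t) - Matrix.diagonal k *ᵥ h (x t)))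
    (hx : ∀ t, 0 ≤ t →
      HasDerivAt x (-(T (x t) *ᵥ (gradf (x t) + (J (x t))ᵀ *ᵥ lam t))) t) :
    ∀ t, 0 ≤ t →
      deriv (fun s => f (x s)) t =
        -((gradf (x t) + (J (x t))ᵀ *ᵥ lam t) ⬝ᵥ
            (T (x t) *ᵥ (gradf (x t) + (J (x t))ᵀ *ᵥ lam t))) +
          lam t ⬝ᵥ (Matrix.diagonal k *ᵥ h (x t)) := by
  intro t ht
  have hd : HasDerivAt (fun s => f (x s)) _ t := (hgrad (x t)).comp_hasDerivAt t (hx t ht)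
  rw [hd.deriv, dotCLM_apply]
  have slack := add_eq_zero_of_ray_min (fun s hs => by
    have := hlam_min t ht (s • lam t) (smul_nonneg hs (hlam_nonneg t ht))
    rwa [mulVec_smul, smul_dotProduct, dotProduct_smul, smul_dotProduct, smul_eq_mul,
      smul_eq_mul, smul_eq_mul, ← mul_assoc s s, ← sq] at this)
  -- Pairing with `Jᵀ λ` moves `J` to the other side.
  have adj : ∀ w, ((J (x t))ᵀ *ᵥ lam t) ⬝ᵥ w = lam t ⬝ᵥ (J (x t) *ᵥ w) := fun w => by
    rw [mulVec_transpose, dotProduct_mulVec]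
  simp only [dotProduct_sub, ← mulVec_mulVec] at slack
  simp only [add_dotProduct, adj, mulVec_add, dotProduct_add, dotProduct_neg]
  linarith
end
end
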